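/- arXiv:2003.04815 — 2 statements merged into one kernel-verified Lean document; each statement's English description precedes it below -/
import Mathlib

section
/- Assume the global ellipticity hypothesis, so that (1 + ã_{2,R}(x,ξ))² − |b̃_{2,R}(x,ξ)|² > 0 for all (x,ξ) and λ₂ is well defined. Then for every (x,ξ): S^{-1}(x,ξ) · E(𝟙 + Ã_{2,R}(x,ξ)) · S(x,ξ) = [[λ₂(x,ξ), 0],[0, −λ₂(x,ξ)]], and s₁(x,ξ)² − |s₂(x,ξ)|² = 1. -/
open MeasureTheory Complex Real Filter

noncomputable section

namespace QLNLS

/-- Points of `ℝ^d` (resp. the torus `𝕋^d = (ℝ/2πℤ)^d`, via `2π`-periodic functions). -/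
abbrev Vec (d : ℕ) := Fin d → ℝ
/-- Frequency lattice `ℤ^d`. -/
abbrev Zd (d : ℕ) := Fin d → ℤ
/-- Functions on the torus. -/
abbrev Fn (d : ℕ) := Vec d → ℂ
/-- Sequences of Fourier coefficients. -/
abbrev Seq (d : ℕ) := Zd d → ℂ
/-- Symbols `a(x, ξ)`. -/
abbrev Sym (d : ℕ) := Vec d → Vec d → ℂ

variable {d : ℕ}

/-- Euclidean norm `|ξ|`. -/
def rnorm (ξ : Vec d) : ℝ := Real.sqrt (∑ i, (ξ i) ^ 2)

/-- Euclidean norm `|n|` of a lattice point. -/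
def znorm (n : Zd d) : ℝ := Real.sqrt (∑ i, ((n i : ℝ)) ^ 2)

/-- Japanese bracket `⟨n⟩ = (1+|n|²)^{1/2}`. -/
def jb (n : Zd d) : ℝ := Real.sqrt (1 + ∑ i, ((n i : ℝ)) ^ 2)

/-- Japanese bracket `⟨ξ⟩` for real frequencies. -/
def jbR (ξ : Vec d) : ℝ := Real.sqrt (1 + ∑ i, (ξ i) ^ 2)

/-- `2π`-periodicity in every coordinate. -/
def Periodic2pi (u : Fn d) : Prop :=
  ∀ (x : Vec d) (n : Zd d), u (fun i => x i + 2 * π * (n i : ℝ)) = u x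

/-- A fundamental domain of the torus. -/
def box (d : ℕ) : Set (Vec d) := Set.univ.pi fun _ : Fin d => Set.Ioc (0 : ℝ) (2 * π)

/-- Fourier coefficient `û(n) = (2π)^{-d/2} ∫ u(x) e^{-i n·x} dx`. -/
def fCoeff (u : Fn d) (n : Zd d) : ℂ :=
  (((2 * π : ℝ) ^ (-(d : ℝ) / 2) : ℝ) : ℂ) *
    ∫ x in box d, u x * Complex.exp (-Complex.I * ((∑ i, (n i : ℝ) * x i : ℝ) : ℂ))

/-- Squared Sobolev norm of a coefficient sequence. -/
def hsNormSq (s : ℝ) (c : Seq d) : ℝ := ∑' n : Zd d, jb n ^ (2 * s) * ‖c n‖ ^ 2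

/-- Sobolev norm of a coefficient sequence. -/
def hsNorm (s : ℝ) (c : Seq d) : ℝ := Real.sqrt (hsNormSq s c)

/-- Membership of a coefficient sequence in `H^s`. -/
def InHsSeq (s : ℝ) (c : Seq d) : Prop :=
  Summable fun n : Zd d => jb n ^ (2 * s) * ‖c n‖ ^ 2

/-- `H^s` norm of a function on the torus. -/
def sobNorm (s : ℝ) (u : Fn d) : ℝ := hsNorm s (fCoeff u)

/-- `u ∈ H^s(𝕋^d;ℂ)`: `u` is `2π`-periodic, its Fourier coefficients are `H^s`-summable,
and `u` is represented by its Fourier series. -/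
def InHs (s : ℝ) (u : Fn d) : Prop :=
  Periodic2pi u ∧ InHsSeq s (fCoeff u) ∧
    ∀ x : Vec d, HasSum
      (fun n : Zd d => (((2 * π : ℝ) ^ (-(d : ℝ) / 2) : ℝ) : ℂ) * fCoeff u n *
        Complex.exp (Complex.I * ((∑ i, (n i : ℝ) * x i : ℝ) : ℂ))) (u x)

/-- Partial derivative `∂_{x_i}` of a function. -/
def pdF (i : Fin d) (u : Fn d) : Fn d := fun x => fderiv ℝ u x (Pi.single i 1)

/-- Partial derivative `∂_{x_i}` of a symbol. -/
def pdx (i : Fin d) (a : Sym d) : Sym d := fun x ξ => fderiv ℝ (fun y => a y ξ) x (Pi.single i 1)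

/-- Partial derivative `∂_{ξ_i}` of a symbol. -/
def pdxi (i : Fin d) (a : Sym d) : Sym d := fun x ξ => fderiv ℝ (fun η => a x η) ξ (Pi.single i 1)

/-- Iterated mixed partial derivative of a symbol along a list of directions
(`Sum.inl j` = `∂_{x_j}`, `Sum.inr j` = `∂_{ξ_j}`). -/
def mderiv (L : List (Fin d ⊕ Fin d)) (a : Sym d) : Sym d :=
  L.foldr (fun i b => match i with | Sum.inl j => pdx j b | Sum.inr j => pdxi j b) a

/-- Number of `ξ`-derivatives in a list of directions. -/
def nXi (L : List (Fin d ⊕ Fin d)) : ℕ := (L.filter fun i => i.isRight).length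

/-- The set of values whose supremum is the symbol seminorm `|a|_{𝒩^m_s}`. -/
def symVals (m : ℝ) (s : ℕ) (a : Sym d) : Set ℝ :=
  { r | ∃ (L : List (Fin d ⊕ Fin d)) (x ξ : Vec d), L.length ≤ s ∧
        r = jbR ξ ^ (-m + (nXi L : ℝ)) * ‖mderiv L a x ξ‖ }

/-- Symbol seminorm `|a|_{𝒩^m_s}`. -/
def symNorm (m : ℝ) (s : ℕ) (a : Sym d) : ℝ := sSup (symVals m s a)

/-- Membership in the symbol class `𝒩^m_s`. -/
def InSymClass (m : ℝ) (s : ℕ) (a : Sym d) : Prop :=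
  ContDiff ℝ (s : ℕ∞) (Function.uncurry a) ∧ (∀ ξ, Periodic2pi fun x => a x ξ) ∧
    BddAbove (symVals m s a)

/-- Poisson bracket `{a,b}`. -/
def poisson (a b : Sym d) : Sym d := fun x ξ =>
  ∑ j, (pdxi j a x ξ * pdx j b x ξ - pdx j a x ξ * pdxi j b x ξ)

/-- The second-order bracket `σ(a,b)`. -/
def sigmaB (a b : Sym d) : Sym d := fun x ξ =>
  ∑ j, ∑ k,
    (pdxi j (pdxi k a) x ξ * pdx j (pdx k b) x ξ
      - 2 * pdx j (pdxi k a) x ξ * pdxi j (pdx k b) x ξ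
      + pdx j (pdx k a) x ξ * pdxi j (pdxi k b) x ξ)

/-- An admissible cut-off function `χ`. -/
structure IsCutoff (χ : ℝ → ℝ) : Prop where
  smooth : ContDiff ℝ (⊤ : ℕ∞) χ
  mem : ∀ t : ℝ, χ t ∈ Set.Icc (0 : ℝ) 1
  eq_one : ∀ t : ℝ, |t| ≤ 5 / 4 → χ t = 1
  eq_zero : ∀ t : ℝ, 8 / 5 ≤ |t| → χ t = 0

/-- `x`-Fourier coefficient `â(η, ξ)` of a symbol. -/
def symCoeff (a : Sym d) (η : Zd d) (ξ : Vec d) : ℂ := fCoeff (fun x => a x ξ) η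

/-- Midpoint `(j+k)/2` of two lattice points. -/
def mid (j k : Zd d) : Vec d := fun i => ((j i + k i : ℤ) : ℝ) / 2

/-- The paradifferential cut-off factor `χ_ε(|j-k|/⟨j+k⟩) = χ(|j-k|/(ε⟨j+k⟩))`. -/
def cutFactor (χ : ℝ → ℝ) (ε : ℝ) (j k : Zd d) : ℝ :=
  χ (znorm (j - k) / (ε * jb (j + k)))

/-- The Weyl paradifferential operator `T_a`, acting on Fourier coefficient sequences:
`(T_a h)^(j) = (2π)^{-d/2} Σ_k χ_ε(|j-k|/⟨j+k⟩) â(j-k,(j+k)/2) ĥ(k)`. -/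
def paraC (χ : ℝ → ℝ) (ε : ℝ) (a : Sym d) (c : Seq d) : Seq d := fun j =>
  (((2 * π : ℝ) ^ (-(d : ℝ) / 2) : ℝ) : ℂ) *
    ∑' k : Zd d, ((cutFactor χ ε j k : ℝ) : ℂ) * symCoeff a (j - k) (mid j k) * c k

/-- The operator `R_a` built from the difference of two cut-offs. -/
def remC (χ : ℝ → ℝ) (ε₁ ε₂ : ℝ) (a : Sym d) (c : Seq d) : Seq d := fun j =>
  (((2 * π : ℝ) ^ (-(d : ℝ) / 2) : ℝ) : ℂ) *
    ∑' k : Zd d, ((cutFactor χ ε₁ j k - cutFactor χ ε₂ j k : ℝ) : ℂ) *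
      symCoeff a (j - k) (mid j k) * c k

/-- Wirtinger derivative `∂_{y_j} = (∂_{Re y_j} - i ∂_{Im y_j})/2`. -/
def wdP {n : ℕ} (j : Fin n) (G : (Fin n → ℂ) → ℂ) : (Fin n → ℂ) → ℂ := fun y =>
  (fderiv ℝ G y (Pi.single j 1) - Complex.I * fderiv ℝ G y (Pi.single j Complex.I)) / 2

/-- Wirtinger derivative `∂_{ȳ_j} = (∂_{Re y_j} + i ∂_{Im y_j})/2`. -/
def wdM {n : ℕ} (j : Fin n) (G : (Fin n → ℂ) → ℂ) : (Fin n → ℂ) → ℂ := fun y =>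
  (fderiv ℝ G y (Pi.single j 1) + Complex.I * fderiv ℝ G y (Pi.single j Complex.I)) / 2

/-- The 1-jet `(u, ∇u)` of a function, as a point of `ℂ^{d+1}`. -/
def jet (u : Fn d) (x : Vec d) : Fin (d + 1) → ℂ :=
  Fin.cons (u x) fun j => pdF j u x

/-- The Hamiltonian nonlinearity
`P(u) = (∂_{ū}F)(u,∇u) - Σ_j ∂_{x_j}((∂_{ū_{x_j}}F)(u,∇u))`. -/
def Pop (F : (Fin (d + 1) → ℂ) → ℂ) (u : Fn d) : Fn d := fun x =>
  wdM 0 F (jet u x) - ∑ j, pdF j (fun y => wdM (Fin.succ j) F (jet u y)) x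

/-- `F ∈ C^∞(ℂ^{d+1};ℝ)` in the real sense, with a zero of order at least 3 at the origin. -/
def GoodF (d : ℕ) (F : (Fin (d + 1) → ℂ) → ℂ) : Prop :=
  ContDiff ℝ (⊤ : ℕ∞) F ∧ (∀ y, (F y).im = 0) ∧ ∀ k : ℕ, k ≤ 2 → iteratedFDeriv ℝ k F 0 = 0

/-- Global ellipticity (Hypothesis 1.1). -/
def Elliptic (d : ℕ) (F : (Fin (d + 1) → ℂ) → ℂ) : Prop :=
  ∃ c₁ > (0 : ℝ), ∃ c₂ > (0 : ℝ), ∀ (ξ : Vec d) (y : Fin (d + 1) → ℂ),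
    (c₁ * ∑ i, (ξ i) ^ 2 ≤
      (∑ j, ∑ k, ((ξ j * ξ k : ℝ) : ℂ) *
        ((if j = k then 1 else 0) + wdP (Fin.succ j) (wdM (Fin.succ k) F) y)).re) ∧
    (ξ ≠ 0 → c₂ ≤
      (1 + (∑ j, ∑ k, ((ξ j * ξ k : ℝ) : ℂ) * wdP (Fin.succ j) (wdM (Fin.succ k) F) y).re
            / ∑ i, (ξ i) ^ 2) ^ 2
        - ‖∑ j, ∑ k, ((ξ j * ξ k : ℝ) : ℂ) * wdM (Fin.succ j) (wdM (Fin.succ k) F) y‖ ^ 2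
            / (∑ i, (ξ i) ^ 2) ^ 2)

/-- The symbol `a₂(x,ξ) = Σ_{j,k} (∂_{ū_{x_k}}∂_{u_{x_j}}F)(u,∇u) ξ_j ξ_k`. -/
def a2sym (F : (Fin (d + 1) → ℂ) → ℂ) (u : Fn d) : Sym d := fun x ξ =>
  ∑ j, ∑ k, ((ξ j * ξ k : ℝ) : ℂ) * wdP (Fin.succ j) (wdM (Fin.succ k) F) (jet u x)

/-- The symbol `b₂(x,ξ) = Σ_{j,k} (∂_{ū_{x_k}}∂_{ū_{x_j}}F)(u,∇u) ξ_j ξ_k`. -/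
def b2sym (F : (Fin (d + 1) → ℂ) → ℂ) (u : Fn d) : Sym d := fun x ξ =>
  ∑ j, ∑ k, ((ξ j * ξ k : ℝ) : ℂ) * wdM (Fin.succ j) (wdM (Fin.succ k) F) (jet u x)

/-- The symbol `a₁(x,ξ) = (i/2) Σ_j ((∂_{ū}∂_{u_{x_j}}F) - (∂_u∂_{ū_{x_j}}F))(u,∇u) ξ_j`. -/
def a1sym (F : (Fin (d + 1) → ℂ) → ℂ) (u : Fn d) : Sym d := fun x ξ =>
  Complex.I / 2 * ∑ j, ((ξ j : ℝ) : ℂ) *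
    (wdM 0 (wdP (Fin.succ j) F) (jet u x) - wdP 0 (wdM (Fin.succ j) F) (jet u x))

/-- Conjugation of a coefficient sequence: the sequence of `conj u`. -/
def starSeq (c : Seq d) : Seq d := fun n => (starRingEnd ℂ) (c (-n))

/-- Pointwise conjugate of a function. -/
def starF (u : Fn d) : Fn d := fun x => (starRingEnd ℂ) (u x)

/-- Pointwise conjugate of a symbol. -/
def starSym (a : Sym d) : Sym d := fun x ξ => (starRingEnd ℂ) (a x ξ)

/-- The symbol `(x,ξ) ↦ conj (a(x,-ξ))`. -/
def flipSym (a : Sym d) : Sym d := fun x ξ => (starRingEnd ℂ) (a x (-ξ))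

/-- The matrix `E = diag(1,-1)` as a sign vector. -/
def Em : Fin 2 → ℂ := ![1, -1]

/-- `Op^BW` of a 2×2 matrix of symbols, acting on vectors of coefficient sequences. -/
def opBWmat (χ : ℝ → ℝ) (ε : ℝ) (A : Fin 2 → Fin 2 → Sym d) (C : Fin 2 → Seq d) :
    Fin 2 → Seq d := fun σ j => ∑ τ, paraC χ ε (A σ τ) (C τ) j

/-- The symbol `|ξ|²`. -/
def sq2sym (d : ℕ) : Sym d := fun _ ξ => (((rnorm ξ) ^ 2 : ℝ) : ℂ)

/-- The matrix of symbols `A₂(x,ξ)`. -/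
def A2mat (F : (Fin (d + 1) → ℂ) → ℂ) (u : Fn d) : Fin 2 → Fin 2 → Sym d :=
  ![![a2sym F u, b2sym F u], ![flipSym (b2sym F u), a2sym F u]]

/-- The matrix of symbols `A₁(x,ξ)`. -/
def A1mat (F : (Fin (d + 1) → ℂ) → ℂ) (u : Fn d) : Fin 2 → Fin 2 → Sym d :=
  ![![a1sym F u, 0], ![0, flipSym (a1sym F u)]]

/-- The full matrix of symbols `|ξ|²𝟙 + A₂(x,ξ) + A₁(x,ξ)`. -/
def sysSym (F : (Fin (d + 1) → ℂ) → ℂ) (u : Fn d) : Fin 2 → Fin 2 → Sym d := fun σ τ =>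
  fun x ξ => (if σ = τ then sq2sym d x ξ else 0) + A2mat F u σ τ x ξ + A1mat F u σ τ x ξ

/-- `H^s` norm of a vector of coefficient sequences. -/
def hsNormVec (s : ℝ) (C : Fin 2 → Seq d) : ℝ := hsNorm s (C 0) + hsNorm s (C 1)

/-- Membership of a vector of coefficient sequences in `H^s`. -/
def InHsVec (s : ℝ) (C : Fin 2 → Seq d) : Prop := InHsSeq s (C 0) ∧ InHsSeq s (C 1)

/-- The `L²` pairing `(U,V) = ∫ (u v̄ + ū v)`, at the level of Fourier coefficients. -/
def pairL2 (C E : Fin 2 → Seq d) : ℂ :=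
  ∑' n : Zd d, (C 0 n * (starRingEnd ℂ) (E 0 n) + C 1 n * (starRingEnd ℂ) (E 1 n))

/-- The scalar `L²` pairing, at the level of Fourier coefficients. -/
def pairS (c e : Seq d) : ℂ := ∑' n : Zd d, c n * (starRingEnd ℂ) (e n)

/-- A matrix of operators is real-to-real: it preserves the subspace `𝒰 = {(u, ū)}`. -/
def PreservesReality (M : (Fin 2 → Seq d) → (Fin 2 → Seq d)) : Prop :=
  ∀ c : Seq d, M ![c, starSeq c] 1 = starSeq (M ![c, starSeq c] 0)

/-- The coefficient vector of `(v(t), conj v(t))`. -/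
def Vvec (v : ℝ → Fn d) (t : ℝ) : Fin 2 → Seq d :=
  ![fCoeff (v t), starSeq (fCoeff (v t))]

/-- `V = (v, v̄)` solves `V̇ = iE Op^BW(|ξ|²𝟙 + A₂ + A₁)V` on `[0,T)`. -/
def SolvesLin (χ : ℝ → ℝ) (ε : ℝ) (F : (Fin (d + 1) → ℂ) → ℂ) (T : ℝ)
    (u v : ℝ → Fn d) : Prop :=
  ∀ᵐ t ∂(volume.restrict (Set.Ico (0 : ℝ) T)), ∀ (σ : Fin 2) (n : Zd d),
    HasDerivAt (fun τ => Vvec v τ σ n)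
      (Complex.I * Em σ * opBWmat χ ε (sysSym F (u t)) (Vvec v t) σ n) t

/-- The regularity hypothesis (4.1):
`u ∈ L^∞([0,T);H^s) ∩ Lip([0,T);H^{s-2})`, with
`sup_t ‖u(t)‖_{H^{2s₀+7}} ≤ r` and `‖∂_t u‖_{H^{2s₀+5}} ≤ r` (as a Lipschitz bound). -/
def RegHyp (s₀ : ℕ) (s T r : ℝ) (u : ℝ → Fn d) : Prop :=
  (∀ t ∈ Set.Ico (0 : ℝ) T, InHs s (u t)) ∧
  (∃ M : ℝ, ∀ t ∈ Set.Ico (0 : ℝ) T, sobNorm s (u t) ≤ M) ∧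
  (∃ L : ℝ, ∀ t₁ ∈ Set.Ico (0 : ℝ) T, ∀ t₂ ∈ Set.Ico (0 : ℝ) T,
    sobNorm (s - 2) (u t₁ - u t₂) ≤ L * |t₁ - t₂|) ∧
  (∀ t ∈ Set.Ico (0 : ℝ) T, sobNorm (2 * (s₀ : ℝ) + 7) (u t) ≤ r) ∧
  (∀ t₁ ∈ Set.Ico (0 : ℝ) T, ∀ t₂ ∈ Set.Ico (0 : ℝ) T,
    sobNorm (2 * (s₀ : ℝ) + 5) (u t₁ - u t₂) ≤ r * |t₁ - t₂|)

/-- `v ∈ L^∞([0,T);H^s) ∩ Lip([0,T);H^{s-2})`. -/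
def RegSol (s T : ℝ) (v : ℝ → Fn d) : Prop :=
  (∀ t ∈ Set.Ico (0 : ℝ) T, InHs s (v t)) ∧
  (∃ M : ℝ, ∀ t ∈ Set.Ico (0 : ℝ) T, sobNorm s (v t) ≤ M) ∧
  (∃ L : ℝ, ∀ t₁ ∈ Set.Ico (0 : ℝ) T, ∀ t₂ ∈ Set.Ico (0 : ℝ) T,
    sobNorm (s - 2) (v t₁ - v t₂) ≤ L * |t₁ - t₂|)

/-- The high-frequency cut-off `𝒳_R(ξ) = 1 - χ(|ξ|/R)`. -/
def cutXR (χ : ℝ → ℝ) (R : ℝ) (ξ : Vec d) : ℝ := 1 - χ (rnorm ξ / R)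

/-- `ã_{2,R}(x,ξ) = |ξ|^{-2} a₂(x,ξ) 𝒳_R(ξ)`. -/
def a2til (F : (Fin (d + 1) → ℂ) → ℂ) (u : Fn d) (χ : ℝ → ℝ) (R : ℝ) : Sym d := fun x ξ =>
  ((((rnorm ξ) ^ 2)⁻¹ * cutXR χ R ξ : ℝ) : ℂ) * a2sym F u x ξ

/-- `b̃_{2,R}(x,ξ) = |ξ|^{-2} b₂(x,ξ) 𝒳_R(ξ)`. -/
def b2til (F : (Fin (d + 1) → ℂ) → ℂ) (u : Fn d) (χ : ℝ → ℝ) (R : ℝ) : Sym d := fun x ξ =>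
  ((((rnorm ξ) ^ 2)⁻¹ * cutXR χ R ξ : ℝ) : ℂ) * b2sym F u x ξ

/-- `λ₂ = ((1+ã_{2,R})² - |b̃_{2,R}|²)^{1/2}`. -/
def lam2 (F : (Fin (d + 1) → ℂ) → ℂ) (u : Fn d) (χ : ℝ → ℝ) (R : ℝ) :
    Vec d → Vec d → ℝ := fun x ξ =>
  Real.sqrt ((1 + (a2til F u χ R x ξ).re) ^ 2 - ‖b2til F u χ R x ξ‖ ^ 2)

/-- The normalizing denominator `(2λ₂(1+ã_{2,R}+λ₂))^{1/2}`. -/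
def sden (F : (Fin (d + 1) → ℂ) → ℂ) (u : Fn d) (χ : ℝ → ℝ) (R : ℝ) :
    Vec d → Vec d → ℝ := fun x ξ =>
  Real.sqrt (2 * lam2 F u χ R x ξ * (1 + (a2til F u χ R x ξ).re + lam2 F u χ R x ξ))

/-- The symbol `s₁`. -/
def s1sym (F : (Fin (d + 1) → ℂ) → ℂ) (u : Fn d) (χ : ℝ → ℝ) (R : ℝ) : Sym d := fun x ξ =>
  (((1 + (a2til F u χ R x ξ).re + lam2 F u χ R x ξ) / sden F u χ R x ξ : ℝ) : ℂ)

/-- The symbol `s₂`. -/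
def s2sym (F : (Fin (d + 1) → ℂ) → ℂ) (u : Fn d) (χ : ℝ → ℝ) (R : ℝ) : Sym d := fun x ξ =>
  -b2til F u χ R x ξ / ((sden F u χ R x ξ : ℝ) : ℂ)

/-- `ã⁺_{2,R} = λ₂ - 1`. -/
def a2plus (F : (Fin (d + 1) → ℂ) → ℂ) (u : Fn d) (χ : ℝ → ℝ) (R : ℝ) : Sym d := fun x ξ =>
  ((lam2 F u χ R x ξ - 1 : ℝ) : ℂ)

/-- The diagonalized second-order symbol `a₂^{(1)}(x,ξ) = |ξ|² ã⁺_{2,R}(x,ξ)`. -/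
def a2one (F : (Fin (d + 1) → ℂ) → ℂ) (u : Fn d) (χ : ℝ → ℝ) (R : ℝ) : Sym d := fun x ξ =>
  (((rnorm ξ) ^ 2 * (lam2 F u χ R x ξ - 1) : ℝ) : ℂ)

/-- The real scalar symbol `ℒ(x,ξ) = |ξ|² + a₂^{(1)}(x,ξ)`. -/
def Lscal (F : (Fin (d + 1) → ℂ) → ℂ) (u : Fn d) (χ : ℝ → ℝ) (R : ℝ) :
    Vec d → Vec d → ℝ := fun x ξ =>
  (rnorm ξ) ^ 2 + (rnorm ξ) ^ 2 * (lam2 F u χ R x ξ - 1)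

/-- The matrix `S(x,ξ)`. -/
def Smat (F : (Fin (d + 1) → ℂ) → ℂ) (u : Fn d) (χ : ℝ → ℝ) (R : ℝ) (x ξ : Vec d) :
    Matrix (Fin 2) (Fin 2) ℂ :=
  !![s1sym F u χ R x ξ, s2sym F u χ R x ξ;
     (starRingEnd ℂ) (s2sym F u χ R x ξ), s1sym F u χ R x ξ]

/-- The matrix `S^{-1}(x,ξ)`. -/
def SmatInv (F : (Fin (d + 1) → ℂ) → ℂ) (u : Fn d) (χ : ℝ → ℝ) (R : ℝ) (x ξ : Vec d) :
    Matrix (Fin 2) (Fin 2) ℂ :=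
  !![s1sym F u χ R x ξ, -s2sym F u χ R x ξ;
     -(starRingEnd ℂ) (s2sym F u χ R x ξ), s1sym F u χ R x ξ]

/-- The matrix `Ã_{2,R}(x,ξ)`. -/
def A2tilMat (F : (Fin (d + 1) → ℂ) → ℂ) (u : Fn d) (χ : ℝ → ℝ) (R : ℝ) (x ξ : Vec d) :
    Matrix (Fin 2) (Fin 2) ℂ :=
  !![a2til F u χ R x ξ, b2til F u χ R x ξ;
     (starRingEnd ℂ) (b2til F u χ R x (-ξ)), a2til F u χ R x ξ]

/-- The matrix `E = diag(1,-1)`. -/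
def EmatM : Matrix (Fin 2) (Fin 2) ℂ := !![1, 0; 0, -1]

/-- The matrix of symbols `S^{-1}(x,ξ)`. -/
def SinvMatSym (F : (Fin (d + 1) → ℂ) → ℂ) (u : Fn d) (χ : ℝ → ℝ) (R : ℝ) :
    Fin 2 → Fin 2 → Sym d :=
  ![![s1sym F u χ R, fun x ξ => -s2sym F u χ R x ξ],
    ![fun x ξ => -(starRingEnd ℂ) (s2sym F u χ R x ξ), s1sym F u χ R]]

/-- The entry `s₁^{(1)}` of the matrix `S₁`. -/
def s1_1 (F : (Fin (d + 1) → ℂ) → ℂ) (u : Fn d) (χ : ℝ → ℝ) (R : ℝ) : Sym d := fun x ξ =>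
  1 / (2 * Complex.I) *
    (poisson (s2sym F u χ R) (starSym (s2sym F u χ R)) x ξ * s1sym F u χ R x ξ
      + 2 * poisson (s1sym F u χ R) (s2sym F u χ R) x ξ *
          (starRingEnd ℂ) (s2sym F u χ R x ξ))

/-- The entry `s₂^{(1)}` of the matrix `S₁`. -/
def s2_1 (F : (Fin (d + 1) → ℂ) → ℂ) (u : Fn d) (χ : ℝ → ℝ) (R : ℝ) : Sym d := fun x ξ =>
  1 / (2 * Complex.I) *
    (poisson (s2sym F u χ R) (starSym (s2sym F u χ R)) x ξ * s2sym F u χ R x ξ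
      + 2 * poisson (s1sym F u χ R) (s2sym F u χ R) x ξ * s1sym F u χ R x ξ)

/-- The matrix `S₁(x,ξ)`. -/
def S1mat (F : (Fin (d + 1) → ℂ) → ℂ) (u : Fn d) (χ : ℝ → ℝ) (R : ℝ) (x ξ : Vec d) :
    Matrix (Fin 2) (Fin 2) ℂ :=
  (1 / (2 * Complex.I)) •
    (!![poisson (s2sym F u χ R) (starSym (s2sym F u χ R)) x ξ,
          2 * poisson (s1sym F u χ R) (s2sym F u χ R) x ξ;
        -2 * poisson (s1sym F u χ R) (starSym (s2sym F u χ R)) x (-ξ),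
          poisson (s2sym F u χ R) (starSym (s2sym F u χ R)) x (-ξ)] *
      Smat F u χ R x ξ)

/-- The symbol `g₁`. -/
def g1sym (F : (Fin (d + 1) → ℂ) → ℂ) (u : Fn d) (χ : ℝ → ℝ) (R : ℝ) : Sym d := fun x ξ =>
  1 / (2 * Complex.I) * poisson (s1_1 F u χ R) (s1sym F u χ R) x ξ
    - 1 / (2 * Complex.I) * poisson (s2_1 F u χ R) (starSym (s2sym F u χ R)) x ξ
    + 1 / 8 * sigmaB (s2sym F u χ R) (starSym (s2sym F u χ R)) x ξ

/-- The symbol `g₂`. -/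
def g2sym (F : (Fin (d + 1) → ℂ) → ℂ) (u : Fn d) (χ : ℝ → ℝ) (R : ℝ) : Sym d := fun x ξ =>
  -(1 / (2 * Complex.I)) * poisson (s1_1 F u χ R) (s2sym F u χ R) x ξ
    + 1 / (2 * Complex.I) * poisson (s2_1 F u χ R) (s1sym F u χ R) x ξ

/-- The derivative operator `∂_{x_i}` at the level of Fourier coefficients. -/
def dOp (i : Fin d) (c : Seq d) : Seq d := fun n => Complex.I * ((n i : ℝ) : ℂ) * c n

/-- A positive constant depending monotonically on a size parameter
(hence bounded from above as the parameter goes to zero). -/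
def GoodConst (C : ℝ → ℝ) : Prop := Monotone C ∧ ∀ x : ℝ, 0 < C x


theorem fderiv_im_zero {n : ℕ} (G : (Fin n → ℂ) → ℂ) (hG : Differentiable ℝ G)
    (h0 : ∀ y, (G y).im = 0) (y v : Fin n → ℂ) : (fderiv ℝ G y v).im = 0 := by
  have h1 : HasFDerivAt (fun z => Complex.imCLM (G z)) (Complex.imCLM.comp (fderiv ℝ G y)) y :=
    Complex.imCLM.hasFDerivAt.comp y (hG y).hasFDerivAt
  have h2 : (fun z => Complex.imCLM (G z)) = fun _ => (0 : ℝ) := by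
    funext z; exact h0 z
  rw [h2] at h1
  have h3 := h1.unique (hasFDerivAt_const (0 : ℝ) y)
  have h4 := congrArg (fun L : (Fin n → ℂ) →L[ℝ] ℝ => L v) h3
  simpa using h4

theorem wdPM_im {n : ℕ} (F : (Fin n → ℂ) → ℂ) (hF : ContDiff ℝ (⊤ : ℕ∞) F)
    (h0 : ∀ y, (F y).im = 0) (j k : Fin n) (y : Fin n → ℂ) :
    (wdP j (wdM k F) y).im = - (wdP k (wdM j F) y).im := by
  have hd1 : Differentiable ℝ F := hF.differentiable (by simp)
  have hd2 : Differentiable ℝ (fderiv ℝ F) :=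
    (hF.fderiv_right (m := 1) (WithTop.coe_le_coe.mpr le_top)).differentiable (by simp)
  have happ : ∀ w : Fin n → ℂ, HasFDerivAt (fun z => fderiv ℝ F z w)
      ((fderiv ℝ (fderiv ℝ F) y).flip w) y := fun w => by
    have := (hd2 y).hasFDerivAt.clm_apply (hasFDerivAt_const w y)
    rwa [ContinuousLinearMap.comp_zero, zero_add] at this
  have hsym : ∀ v w, fderiv ℝ (fderiv ℝ F) y v w = fderiv ℝ (fderiv ℝ F) y w v := fun v w =>
    second_derivative_symmetric (fun z => (hd1 z).hasFDerivAt) (hd2 y).hasFDerivAt v w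
  have him : ∀ v w, (fderiv ℝ (fderiv ℝ F) y v w).im = 0 := fun v w => by
    have hdw : Differentiable ℝ (fun z => fderiv ℝ F z w) := fun z =>
      (hd2 z).clm_apply (differentiableAt_const w)
    have := fderiv_im_zero (fun z => fderiv ℝ F z w) hdw
      (fun z => fderiv_im_zero F hd1 h0 z w) y v
    rw [(happ w).fderiv] at this
    simpa using this
  have hM : ∀ k v, fderiv ℝ (wdM k F) y v =
      (fderiv ℝ (fderiv ℝ F) y v (Pi.single k 1)
        + Complex.I * fderiv ℝ (fderiv ℝ F) y v (Pi.single k Complex.I)) / 2 := fun k v => by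
    have h1 := ((happ (Pi.single k 1)).add
      ((happ (Pi.single k Complex.I)).const_mul Complex.I)).mul_const ((2 : ℂ)⁻¹)
    have h2 : fderiv ℝ (wdM k F) y = _ := (HasFDerivAt.congr_of_eventuallyEq h1
      (Filter.Eventually.of_forall fun z => by simp [wdM, div_eq_mul_inv])).fderiv
    rw [h2]
    simp [div_eq_mul_inv]
    ring
  have key : ∀ j k, (wdP j (wdM k F) y).im =
      ((fderiv ℝ (fderiv ℝ F) y (Pi.single j 1) (Pi.single k Complex.I)).re
       - (fderiv ℝ (fderiv ℝ F) y (Pi.single k 1) (Pi.single j Complex.I)).re) / 4 := fun j k => by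
    have e : wdP j (wdM k F) y =
      (fderiv ℝ (fderiv ℝ F) y (Pi.single j 1) (Pi.single k 1)
        + fderiv ℝ (fderiv ℝ F) y (Pi.single j Complex.I) (Pi.single k Complex.I)
        + Complex.I * (fderiv ℝ (fderiv ℝ F) y (Pi.single j 1) (Pi.single k Complex.I)
          - fderiv ℝ (fderiv ℝ F) y (Pi.single k 1) (Pi.single j Complex.I))) * ((1/4 : ℝ) : ℂ) := by
      unfold wdP
      rw [hM, hM, hsym (Pi.single k 1) (Pi.single j Complex.I)]
      push_cast
      linear_combination (-1/4) * fderiv ℝ (fderiv ℝ F) y (Pi.single j Complex.I) (Pi.single k Complex.I) * Complex.I_mul_I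
    rw [e, Complex.im_mul_ofReal]
    simp [him]
    ring
  rw [key, key]
  ring

theorem a2sym_im (F : (Fin (d + 1) → ℂ) → ℂ) (hF : GoodF d F) (u : Fn d) (x ξ : Vec d) :
    (a2sym F u x ξ).im = 0 := by
  have h : (a2sym F u x ξ).im = -(a2sym F u x ξ).im := by
    unfold a2sym
    simp only [Complex.im_sum, Complex.im_ofReal_mul]
    conv_lhs => rw [Finset.sum_comm]
    rw [← Finset.sum_neg_distrib]
    refine Finset.sum_congr rfl fun j _ => ?_
    rw [← Finset.sum_neg_distrib]
    refine Finset.sum_congr rfl fun k _ => ?_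
    rw [wdPM_im F hF.1 hF.2.1]
    ring
  linarith

theorem b2til_neg (F : (Fin (d + 1) → ℂ) → ℂ) (u : Fn d) (χ : ℝ → ℝ) (R : ℝ) (x ξ : Vec d) :
    b2til F u χ R x (-ξ) = b2til F u χ R x ξ := by
  simp [b2til, b2sym, cutXR, rnorm]

theorem alg (A b bc l D : ℂ) (hl : l ^ 2 = A ^ 2 - b * bc) (hD : D ^ 2 = 2 * l * (A + l))
    (hD0 : D ≠ 0) :
    (!![(A + l) / D, -(-b / D); -(-bc / D), (A + l) / D] : Matrix (Fin 2) (Fin 2) ℂ) *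
      (!![1, 0; 0, -1] * !![A, b; bc, A]) * !![(A + l) / D, -b / D; -bc / D, (A + l) / D]
      = !![l, 0; 0, -l] ∧ ((A + l) / D) ^ 2 - (b * bc) / D ^ 2 = 1 := by
  have hbb : b * bc = A ^ 2 - l ^ 2 := by rw [hl]; ring
  refine ⟨?_, ?_⟩
  · ext i j
    fin_cases i <;> fin_cases j <;> simp [Matrix.mul_apply, Fin.sum_univ_two] <;> field_simp
    · rw [hD]; linear_combination (-A - 2 * l) * hbb
    · linear_combination (b) * hbb
    · linear_combination (-bc) * hbb
    · rw [hD]; linear_combination (A + 2 * l) * hbb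
  · rw [div_pow, ← sub_div, div_eq_one_iff_eq (pow_ne_zero 2 hD0), hbb, hD]
    ring

theorem ell_pos (F : (Fin (d + 1) → ℂ) → ℂ) (hE : Elliptic d F)
    (χ : ℝ → ℝ) (hχ : IsCutoff χ) (R : ℝ) (u : Fn d) (x ξ : Vec d) :
    ‖b2til F u χ R x ξ‖ < 1 + (a2til F u χ R x ξ).re := by
  by_cases hξ : ξ = 0
  · subst hξ
    simp [b2til, a2til, rnorm]
  obtain ⟨c₁, hc₁, c₂, hc₂, h⟩ := hE
  obtain ⟨h1, h2⟩ := h ξ (jet u x)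
  replace h2 := h2 hξ
  have hN : 0 < ∑ i, (ξ i) ^ 2 := by
    obtain ⟨i, hi⟩ := Function.ne_iff.mp hξ
    exact Finset.sum_pos' (fun i _ => sq_nonneg _) ⟨i, Finset.mem_univ _, by
      have : ξ i ≠ 0 := hi
      positivity⟩
  have hr : rnorm ξ ^ 2 = ∑ i, (ξ i) ^ 2 := Real.sq_sqrt hN.le
  have hsplit : (∑ j, ∑ k, ((ξ j * ξ k : ℝ) : ℂ) *
        ((if j = k then 1 else 0) + wdP (Fin.succ j) (wdM (Fin.succ k) F) (jet u x))).re
      = (∑ i, (ξ i) ^ 2) + (a2sym F u x ξ).re := by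
    simp only [mul_add, Finset.sum_add_distrib, Complex.add_re]
    congr 1
    simp only [mul_ite, mul_one, mul_zero, Finset.sum_ite_eq, Finset.mem_univ, if_true]
    rw [Complex.re_sum]
    simp [pow_two]
  rw [hsplit] at h1
  change c₂ ≤ (1 + (a2sym F u x ξ).re / _) ^ 2 - ‖b2sym F u x ξ‖ ^ 2 / _ at h2
  have hθ := hχ.mem (rnorm ξ / R)
  have e1 : (a2til F u χ R x ξ).re = cutXR χ R ξ * ((a2sym F u x ξ).re / ∑ i, (ξ i) ^ 2) := by
    unfold a2til
    rw [Complex.re_ofReal_mul, hr]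
    ring
  have hθ0 : 0 ≤ cutXR χ R ξ := by unfold cutXR; linarith [hθ.2]
  have hθ1 : cutXR χ R ξ ≤ 1 := by unfold cutXR; linarith [hθ.1]
  have e2 : ‖b2til F u χ R x ξ‖ = cutXR χ R ξ * (‖b2sym F u x ξ‖ / ∑ i, (ξ i) ^ 2) := by
    unfold b2til
    rw [norm_mul, hr, Complex.norm_real, Real.norm_of_nonneg (by positivity)]
    ring
  rw [e1, e2]
  rw [← div_pow] at h2
  have h3 : 0 < 1 + (a2sym F u x ξ).re / ∑ i, (ξ i) ^ 2 := by
    have : 0 < (∑ i, (ξ i) ^ 2 + (a2sym F u x ξ).re) / ∑ i, (ξ i) ^ 2 :=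
      div_pos (lt_of_lt_of_le (by positivity) h1) hN
    rwa [add_div, div_self hN.ne'] at this
  generalize (a2sym F u x ξ).re / ∑ i, (ξ i) ^ 2 = p at *
  generalize ‖b2sym F u x ξ‖ / ∑ i, (ξ i) ^ 2 = q at *
  generalize cutXR χ R ξ = θ at *
  have h4 : q < 1 + p := lt_of_pow_lt_pow_left₀ 2 h3.le (by linarith)
  rcases hθ0.eq_or_lt with h | h
  · rw [← h]; norm_num
  · nlinarith [mul_lt_mul_of_pos_left h4 h]

/-- eq. (4.7): under global ellipticity the quantity
`(1+ã_{2,R})² - |b̃_{2,R}|²` is positive (so `λ₂` is well defined), and for every `(x,ξ)`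
one has the exact diagonalization
`S^{-1}(x,ξ) E(𝟙 + Ã_{2,R}(x,ξ)) S(x,ξ) = diag(λ₂, -λ₂)` and `s₁² - |s₂|² = 1`. -/
theorem statement_13 (d : ℕ) (hd : 1 ≤ d) (F : (Fin (d + 1) → ℂ) → ℂ)
    (hF : GoodF d F) (hE : Elliptic d F)
    (χ : ℝ → ℝ) (hχ : IsCutoff χ) (R : ℝ) (hR : 0 < R) :
    ∀ (u : Fn d) (x ξ : Vec d),
      0 < (1 + (a2til F u χ R x ξ).re) ^ 2 - ‖b2til F u χ R x ξ‖ ^ 2 ∧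
      SmatInv F u χ R x ξ * (EmatM * (1 + A2tilMat F u χ R x ξ)) * Smat F u χ R x ξ
        = !![((lam2 F u χ R x ξ : ℝ) : ℂ), 0; 0, -((lam2 F u χ R x ξ : ℝ) : ℂ)] ∧
      (s1sym F u χ R x ξ) ^ 2 - ((‖s2sym F u χ R x ξ‖ ^ 2 : ℝ) : ℂ) = 1 := by
  intro u x ξ
  have hlt := ell_pos F hE χ hχ R u x ξ
  have hb0 := norm_nonneg (b2til F u χ R x ξ)
  have hpos : 0 < (1 + (a2til F u χ R x ξ).re) ^ 2 - ‖b2til F u χ R x ξ‖ ^ 2 := by nlinarith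
  refine ⟨hpos, ?_⟩
  have hlam : 0 < lam2 F u χ R x ξ := Real.sqrt_pos.mpr hpos
  have hlam2 : lam2 F u χ R x ξ ^ 2 = (1 + (a2til F u χ R x ξ).re) ^ 2
      - ‖b2til F u χ R x ξ‖ ^ 2 := Real.sq_sqrt hpos.le
  have hin : 0 < 2 * lam2 F u χ R x ξ * (1 + (a2til F u χ R x ξ).re + lam2 F u χ R x ξ) :=
    mul_pos (by linarith) (by linarith)
  have hD : 0 < sden F u χ R x ξ := Real.sqrt_pos.mpr hin
  have hD2 : sden F u χ R x ξ ^ 2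
      = 2 * lam2 F u χ R x ξ * (1 + (a2til F u χ R x ξ).re + lam2 F u χ R x ξ) :=
    Real.sq_sqrt hin.le
  have ha : a2til F u χ R x ξ = (((a2til F u χ R x ξ).re : ℝ) : ℂ) := by
    apply Complex.ext
    · simp
    · rw [Complex.ofReal_im]
      unfold a2til
      rw [Complex.im_ofReal_mul, a2sym_im F hF, mul_zero]
  have hbb : b2til F u χ R x ξ * (starRingEnd ℂ) (b2til F u χ R x ξ)
      = ((‖b2til F u χ R x ξ‖ ^ 2 : ℝ) : ℂ) := by
    rw [Complex.mul_conj, Complex.normSq_eq_norm_sq]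
  have hs1 : s1sym F u χ R x ξ = (((1 + (a2til F u χ R x ξ).re : ℝ) : ℂ) + (lam2 F u χ R x ξ : ℂ))
      / (sden F u χ R x ξ : ℂ) := by
    simp [s1sym]
  have hs2c : (starRingEnd ℂ) (s2sym F u χ R x ξ) =
      -(starRingEnd ℂ) (b2til F u χ R x ξ) / (sden F u χ R x ξ : ℂ) := by
    simp [s2sym]
  have hs2n : ((‖s2sym F u χ R x ξ‖ ^ 2 : ℝ) : ℂ) =
      (b2til F u χ R x ξ * (starRingEnd ℂ) (b2til F u χ R x ξ)) / (sden F u χ R x ξ : ℂ) ^ 2 := by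
    rw [hbb]
    simp [s2sym, div_pow]
  have hA : 1 + A2tilMat F u χ R x ξ = !![((1 + (a2til F u χ R x ξ).re : ℝ) : ℂ),
      b2til F u χ R x ξ; (starRingEnd ℂ) (b2til F u χ R x ξ),
      ((1 + (a2til F u χ R x ξ).re : ℝ) : ℂ)] := by
    unfold A2tilMat
    rw [b2til_neg, Matrix.one_fin_two, Complex.ofReal_add, ← ha]
    ext i j
    fin_cases i <;> fin_cases j <;> simp
  have key := alg ((1 + (a2til F u χ R x ξ).re : ℝ) : ℂ) (b2til F u χ R x ξ)
    ((starRingEnd ℂ) (b2til F u χ R x ξ)) (lam2 F u χ R x ξ : ℂ) (sden F u χ R x ξ : ℂ)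
    (by rw [hbb]; exact_mod_cast hlam2) (by exact_mod_cast hD2) (by exact_mod_cast hD.ne')
  rw [hA, hs2n, hs1]
  refine ⟨?_, key.2⟩
  unfold SmatInv Smat EmatM
  rw [hs2c, hs1]
  exact key.1

end QLNLS
end
end

section
/- The symbols ã⁺_{2,R} := λ₂ − 1, ã_{2,R}, b̃_{2,R}, s₁, s₂, g₁, g₂ are even in the variable ξ ∈ ℝ^d, while the entries of the matrix S₁ are odd in ξ. Moreover, for an integer s₀ ≥ d+1 and p ∈ ℕ: |ã⁺_{2,R}|_{𝒩⁰_p} + |ã_{2,R}|_{𝒩⁰_p} + |b̃_{2,R}|_{𝒩⁰_p} + |s₁ − 1|_{𝒩⁰_p} + |s₂|_{𝒩⁰_p} ≤ C₁ ‖u‖_{H^{p+s₀+1}} whenever p+s₀+1 ≤ s, and |{s₂,s₁}|_{𝒩^{-1}_p} + |{s₂,conj(s₂)}|_{𝒩^{-1}_p} + |g_i|_{𝒩^{-2}_p} ≤ C₂ ‖u‖_{H^{p+s₀+3}} (i = 1,2) whenever p+s₀+3 ≤ s, with C₁ depending on ‖u‖_{H^{p+s₀+1}} and C₂ on ‖u‖_{H^{p+s₀+3}},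 both bounded as u → 0. -/
open MeasureTheory Complex Real Filter

noncomputable section

namespace QLNLS

variable {d : ℕ}

section

section
/-- unified derivative -/
def DD (k : Fin d ⊕ Fin d) (a : Sym d) : Sym d :=
  match k with | Sum.inl j => pdx j a | Sum.inr j => pdxi j a

def ordK (k : Fin d ⊕ Fin d) : ℝ := match k with | Sum.inl _ => 0 | Sum.inr _ => 1

def PD (a : Sym d) : Prop :=
  (∀ x ξ, DifferentiableAt ℝ (fun y => a y ξ) x) ∧ (∀ x ξ, DifferentiableAt ℝ (fun η => a x η) ξ)

def Bnd {ι : Type} (w : ι → ℝ) (m : ℝ) (a : ι → Sym d) : Prop :=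
  ∃ C : ℝ, ∀ i x ξ, ‖a i x ξ‖ ≤ C * w i * jbR ξ ^ m

def Cls {ι : Type} (w : ι → ℝ) : ℕ → ℝ → (ι → Sym d) → Prop
  | 0, m, a => Bnd w m a
  | p + 1, m, a => Bnd w m a ∧ (∀ i, PD (a i)) ∧ ∀ k, Cls w p (m - ordK k) (fun i => DD k (a i))

lemma jbR_one_le (ξ : Vec d) : 1 ≤ jbR ξ := by
  unfold jbR
  rw [Real.one_le_sqrt]
  have : 0 ≤ ∑ i, (ξ i) ^ 2 := Finset.sum_nonneg fun i _ => sq_nonneg _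
  linarith

lemma jbR_pos (ξ : Vec d) : 0 < jbR ξ := lt_of_lt_of_le one_pos (jbR_one_le ξ)

variable {ι : Type} {w w₁ w₂ : ι → ℝ}

lemma Cls.bnd {p : ℕ} {m : ℝ} {a : ι → Sym d} (h : Cls w p m a) : Bnd w m a := by
  cases p with
  | zero => exact h
  | succ p => exact h.1

lemma Cls.pred {p : ℕ} : ∀ {m : ℝ} {a : ι → Sym d}, Cls w (p + 1) m a → Cls w p m a := by
  induction p with
  | zero => intro m a h; exact h.1
  | succ p ih => intro m a h; exact ⟨h.1, h.2.1, fun k => ih (h.2.2 k)⟩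

lemma Bnd.weight {m : ℝ} {a : ι → Sym d} (h : Bnd w₁ m a) (K : ℝ) (h0 : ∀ i, 0 ≤ w₁ i)
    (hK : ∀ i, w₁ i ≤ K * w₂ i) : Bnd w₂ m a := by
  obtain ⟨C, hC⟩ := h
  refine ⟨|C| * K, fun i x ξ => (hC i x ξ).trans ?_⟩
  have h1 : 0 ≤ jbR ξ ^ m := Real.rpow_nonneg (jbR_pos ξ).le _
  have h2 : C * w₁ i ≤ |C| * K * w₂ i := by
    calc C * w₁ i ≤ |C| * w₁ i := mul_le_mul_of_nonneg_right (le_abs_self C) (h0 i)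
      _ ≤ |C| * (K * w₂ i) := mul_le_mul_of_nonneg_left (hK i) (abs_nonneg C)
      _ = _ := by ring
  exact mul_le_mul_of_nonneg_right h2 h1

lemma Cls.weight {p : ℕ} (K : ℝ) (h0 : ∀ i, 0 ≤ w₁ i) (hK : ∀ i, w₁ i ≤ K * w₂ i) :
    ∀ {m : ℝ} {a : ι → Sym d}, Cls w₁ p m a → Cls w₂ p m a := by
  induction p with
  | zero => intro m a h; exact Bnd.weight h K h0 hK
  | succ p ih => intro m a h; exact ⟨Bnd.weight h.1 K h0 hK, h.2.1, fun k => ih (h.2.2 k)⟩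

lemma Bnd.order {m m' : ℝ} {a : ι → Sym d} (h : Bnd w m a) (h0 : ∀ i, 0 ≤ w i)
    (hm : m ≤ m') : Bnd w m' a := by
  obtain ⟨C, hC⟩ := h
  refine ⟨|C|, fun i x ξ => (hC i x ξ).trans ?_⟩
  have h1 : jbR ξ ^ m ≤ jbR ξ ^ m' := Real.rpow_le_rpow_of_exponent_le (jbR_one_le ξ) hm
  have h2 : C * w i ≤ |C| * w i := mul_le_mul_of_nonneg_right (le_abs_self C) (h0 i)
  exact mul_le_mul h2 h1 (Real.rpow_nonneg (jbR_pos ξ).le _) (mul_nonneg (abs_nonneg _) (h0 i))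

lemma Cls.order {p : ℕ} (h0 : ∀ i, 0 ≤ w i) :
    ∀ {m m' : ℝ} {a : ι → Sym d}, Cls w p m a → m ≤ m' → Cls w p m' a := by
  induction p with
  | zero => intro m m' a h hm; exact Bnd.order h h0 hm
  | succ p ih =>
    intro m m' a h hm
    exact ⟨Bnd.order h.1 h0 hm, h.2.1, fun k => ih (h.2.2 k) (by linarith)⟩

lemma Cls.cast {p : ℕ} {m m' : ℝ} {a a' : ι → Sym d} (h : Cls w p m a) (hm : m = m')
    (ha : ∀ i x ξ, a i x ξ = a' i x ξ) : Cls w p m' a' := by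
  have : a = a' := by funext i x ξ; exact ha i x ξ
  subst this; subst hm; exact h

lemma DD_add {a b : Sym d} (ha : PD a) (hb : PD b) (k) (x ξ : Vec d) :
    DD k (fun x ξ => a x ξ + b x ξ) x ξ = DD k a x ξ + DD k b x ξ := by
  cases k with
  | inl j => simp only [DD, pdx]; rw [fderiv_fun_add (ha.1 x ξ) (hb.1 x ξ)]; rfl
  | inr j => simp only [DD, pdxi]; rw [fderiv_fun_add (ha.2 x ξ) (hb.2 x ξ)]; rfl

lemma DD_mul {a b : Sym d} (ha : PD a) (hb : PD b) (k) (x ξ : Vec d) :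
    DD k (fun x ξ => a x ξ * b x ξ) x ξ = DD k a x ξ * b x ξ + a x ξ * DD k b x ξ := by
  cases k with
  | inl j =>
    simp only [DD, pdx]; rw [fderiv_fun_mul (ha.1 x ξ) (hb.1 x ξ)]
    simp only [add_apply, smul_apply, smul_eq_mul]; ring
  | inr j =>
    simp only [DD, pdxi]; rw [fderiv_fun_mul (ha.2 x ξ) (hb.2 x ξ)]
    simp only [add_apply, smul_apply, smul_eq_mul]; ring

lemma hasFDerivAt_star {E : Type} [NormedAddCommGroup E] [NormedSpace ℝ E] {f : E → ℂ} {x : E}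
    {f' : E →L[ℝ] ℂ} (h : HasFDerivAt f f' x) :
    HasFDerivAt (fun y => (starRingEnd ℂ) (f y)) ((Complex.conjCLE : ℂ →L[ℝ] ℂ).comp f') x := by
  have := (Complex.conjCLE : ℂ →L[ℝ] ℂ).hasFDerivAt (x := f x)
  exact this.comp x h

lemma DD_star {a : Sym d} (ha : PD a) (k) (x ξ : Vec d) :
    DD k (starSym a) x ξ = (starRingEnd ℂ) (DD k a x ξ) := by
  cases k with
  | inl j =>
    simp only [DD, pdx, starSym]
    rw [(hasFDerivAt_star (ha.1 x ξ).hasFDerivAt).fderiv]; rfl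
  | inr j =>
    simp only [DD, pdxi, starSym]
    rw [(hasFDerivAt_star (ha.2 x ξ).hasFDerivAt).fderiv]; rfl

lemma PD.star {a : Sym d} (ha : PD a) : PD (starSym a) :=
  ⟨fun x ξ => (hasFDerivAt_star (ha.1 x ξ).hasFDerivAt).differentiableAt,
   fun x ξ => (hasFDerivAt_star (ha.2 x ξ).hasFDerivAt).differentiableAt⟩

lemma PD.add {a b : Sym d} (ha : PD a) (hb : PD b) : PD (fun x ξ => a x ξ + b x ξ) :=
  ⟨fun x ξ => (ha.1 x ξ).fun_add (hb.1 x ξ), fun x ξ => (ha.2 x ξ).fun_add (hb.2 x ξ)⟩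

lemma PD.mul {a b : Sym d} (ha : PD a) (hb : PD b) : PD (fun x ξ => a x ξ * b x ξ) :=
  ⟨fun x ξ => (ha.1 x ξ).fun_mul (hb.1 x ξ), fun x ξ => (ha.2 x ξ).fun_mul (hb.2 x ξ)⟩

lemma Bnd.add {m : ℝ} {a b : ι → Sym d} (ha : Bnd w m a) (hb : Bnd w m b) :
    Bnd w m (fun i x ξ => a i x ξ + b i x ξ) := by
  obtain ⟨C, hC⟩ := ha
  obtain ⟨C', hC'⟩ := hb
  refine ⟨C + C', fun i x ξ => (norm_add_le _ _).trans ?_⟩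
  have := hC i x ξ
  have := hC' i x ξ
  linarith

lemma Cls.add {p : ℕ} : ∀ {m : ℝ} {a b : ι → Sym d}, Cls w p m a → Cls w p m b →
    Cls w p m (fun i x ξ => a i x ξ + b i x ξ) := by
  induction p with
  | zero => intro m a b ha hb; exact Bnd.add ha hb
  | succ p ih =>
    intro m a b ha hb
    refine ⟨Bnd.add ha.1 hb.1, fun i => (ha.2.1 i).add (hb.2.1 i), fun k => ?_⟩
    exact (ih (ha.2.2 k) (hb.2.2 k)).cast rfl fun i x ξ =>
      (DD_add (ha.2.1 i) (hb.2.1 i) k x ξ).symm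

lemma Bnd.mul {m₁ m₂ : ℝ} {a b : ι → Sym d} (ha : Bnd w₁ m₁ a) (hb : Bnd w₂ m₂ b) :
    Bnd (fun i => w₁ i * w₂ i) (m₁ + m₂) (fun i x ξ => a i x ξ * b i x ξ) := by
  obtain ⟨C, hC⟩ := ha
  obtain ⟨C', hC'⟩ := hb
  refine ⟨C * C', fun i x ξ => ?_⟩
  rw [norm_mul, Real.rpow_add (jbR_pos ξ)]
  have h := mul_le_mul (hC i x ξ) (hC' i x ξ) (norm_nonneg _) ((norm_nonneg _).trans (hC i x ξ))
  refine h.trans (le_of_eq (by ring))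

lemma Cls.mul {p : ℕ} : ∀ {m₁ m₂ : ℝ} {a b : ι → Sym d}, Cls w₁ p m₁ a → Cls w₂ p m₂ b →
    Cls (fun i => w₁ i * w₂ i) p (m₁ + m₂) (fun i x ξ => a i x ξ * b i x ξ) := by
  induction p with
  | zero => intro m₁ m₂ a b ha hb; exact Bnd.mul ha hb
  | succ p ih =>
    intro m₁ m₂ a b ha hb
    refine ⟨Bnd.mul ha.1 hb.1, fun i => (ha.2.1 i).mul (hb.2.1 i), fun k => ?_⟩
    have h1 := ih (ha.2.2 k) hb.pred
    have h2 := ih ha.pred (hb.2.2 k)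
    have h1' := h1.cast (m' := m₁ + m₂ - ordK k) (by ring) (fun _ _ _ => rfl)
    have h2' := h2.cast (m' := m₁ + m₂ - ordK k) (by ring) (fun _ _ _ => rfl)
    exact (h1'.add h2').cast rfl fun i x ξ => (DD_mul (ha.2.1 i) (hb.2.1 i) k x ξ).symm

lemma Cls.star {p : ℕ} : ∀ {m : ℝ} {a : ι → Sym d}, Cls w p m a →
    Cls w p m (fun i => starSym (a i)) := by
  have hb : ∀ {m : ℝ} {a : ι → Sym d}, Bnd w m a → Bnd w m (fun i => starSym (a i)) := by
    rintro m a ⟨C, hC⟩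
    refine ⟨C, fun i x ξ => ?_⟩
    have : ‖starSym (a i) x ξ‖ = ‖a i x ξ‖ := RCLike.norm_conj _
    rw [this]; exact hC i x ξ
  induction p with
  | zero => intro m a h; exact hb h
  | succ p ih =>
    intro m a h
    exact ⟨hb h.1, fun i => (h.2.1 i).star, fun k =>
      (ih (h.2.2 k)).cast rfl fun i x ξ => (DD_star (h.2.1 i) k x ξ).symm⟩

lemma PD_const (c : ℂ) : PD (fun _ _ => c : Sym d) :=
  ⟨fun _ _ => differentiableAt_const _, fun _ _ => differentiableAt_const _⟩

lemma DD_const (c : ℂ) (k) (x ξ : Vec d) : DD k (fun _ _ => c : Sym d) x ξ = 0 := by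
  cases k <;> simp [DD, pdx, pdxi]

lemma Cls.zero {p : ℕ} : ∀ {m : ℝ}, Cls w p m (fun _ _ _ => 0 : ι → Sym d) := by
  have hb : ∀ {m : ℝ}, Bnd w m (fun _ _ _ => 0 : ι → Sym d) := fun {m} => ⟨0, by simp⟩
  induction p with
  | zero => intro m; exact hb
  | succ p ih =>
    intro m
    exact ⟨hb, fun _ => PD_const 0, fun k => ih.cast rfl fun i x ξ => (DD_const 0 k x ξ).symm⟩

lemma Cls.const {p : ℕ} (c : ℂ) : Cls (fun _ => 1) p 0 (fun _ _ _ => c : ι → Sym d) := by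
  have hb : Bnd (fun _ => 1) 0 (fun _ _ _ => c : ι → Sym d) := ⟨‖c‖, by simp⟩
  cases p with
  | zero => exact hb
  | succ p =>
    exact ⟨hb, fun _ => PD_const c, fun k => Cls.zero.cast rfl fun i x ξ => (DD_const c k x ξ).symm⟩

lemma Cls.smul {p : ℕ} {m : ℝ} {a : ι → Sym d} (c : ℂ) (h : Cls w p m a) :
    Cls w p m (fun i x ξ => c * a i x ξ) := by
  have := (Cls.const (d := d) (ι := ι) (p := p) c).mul h
  simpa using this

lemma Cls.neg {p : ℕ} {m : ℝ} {a : ι → Sym d} (h : Cls w p m a) :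
    Cls w p m (fun i x ξ => - a i x ξ) := by simpa using h.smul (-1)

lemma Cls.sub {p : ℕ} {m : ℝ} {a b : ι → Sym d} (h : Cls w p m a) (h' : Cls w p m b) :
    Cls w p m (fun i x ξ => a i x ξ - b i x ξ) := by
  simpa [sub_eq_add_neg] using h.add h'.neg

lemma Cls.sum {p : ℕ} {m : ℝ} {κ : Type} (S : Finset κ) {a : κ → ι → Sym d}
    (h : ∀ j, Cls w p m (a j)) : Cls w p m (fun i x ξ => ∑ j ∈ S, a j i x ξ) := by
  classical
  induction S using Finset.induction_on with
  | empty => simpa using Cls.zero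
  | insert j S hj ih =>
    exact ((h j).add ih).cast rfl fun i x ξ => by rw [Finset.sum_insert hj]

lemma Cls.of_mul_one {p : ℕ} {m : ℝ} {a : ι → Sym d} (h : Cls (fun i => w i * (fun _ => 1) i) p m a) :
    Cls w p m a := by simpa using h

lemma Cls.of_one_mul {p : ℕ} {m : ℝ} {a : ι → Sym d} (h : Cls (fun i => (fun _ => 1) i * w i) p m a) :
    Cls w p m a := by simpa using h

lemma mderiv_append (L : List (Fin d ⊕ Fin d)) (k) (a : Sym d) :
    mderiv (L ++ [k]) a = mderiv L (DD k a) := by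
  unfold mderiv
  rw [List.foldr_append]
  cases k <;> rfl

lemma nXi_append (L : List (Fin d ⊕ Fin d)) (k) : (nXi (L ++ [k]) : ℝ) = nXi L + ordK k := by
  unfold nXi
  cases k <;> simp [ordK, List.filter_append, List.filter_cons]

lemma Cls.mderiv_bound {p : ℕ} (h0 : ∀ i, 0 ≤ w i) : ∀ {m : ℝ} {a : ι → Sym d}, Cls w p m a →
    ∃ C : ℝ, 0 ≤ C ∧ ∀ L : List (Fin d ⊕ Fin d), L.length ≤ p → ∀ i x ξ,
      ‖mderiv L (a i) x ξ‖ ≤ C * w i * jbR ξ ^ (m - nXi L) := by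
  have base : ∀ {m : ℝ} {a : ι → Sym d}, Bnd w m a → ∃ C : ℝ, 0 ≤ C ∧ ∀ i x ξ,
      ‖mderiv [] (a i) x ξ‖ ≤ C * w i * jbR ξ ^ (m - nXi ([] : List (Fin d ⊕ Fin d))) := by
    rintro m a ⟨C, hC⟩
    refine ⟨|C|, abs_nonneg C, fun i x ξ => (hC i x ξ).trans ?_⟩
    simp only [nXi, List.filter_nil, List.length_nil, Nat.cast_zero, sub_zero]
    exact mul_le_mul_of_nonneg_right (mul_le_mul_of_nonneg_right (le_abs_self C) (h0 i))
      (Real.rpow_nonneg (jbR_pos ξ).le _)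
  induction p with
  | zero =>
    intro m a h
    obtain ⟨C, hC0, hC⟩ := base h
    refine ⟨C, hC0, fun L hL => ?_⟩
    have : L = [] := List.length_eq_zero_iff.mp (by omega)
    subst this; exact hC
  | succ p ih =>
    intro m a h
    obtain ⟨C, hC0, hC⟩ := base h.1
    choose Ck hCk0 hCk using fun k => ih (h.2.2 k)
    have hs : ∀ k, Ck k ≤ ∑ k, Ck k := fun k =>
      Finset.single_le_sum (f := Ck) (fun k _ => hCk0 k) (Finset.mem_univ k)
    have hs0 : 0 ≤ ∑ k, Ck k := Finset.sum_nonneg fun k _ => hCk0 k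
    refine ⟨C + ∑ k, Ck k, by positivity, fun L hL i x ξ => ?_⟩
    have hj : ∀ t : ℝ, 0 ≤ jbR ξ ^ t := fun t => Real.rpow_nonneg (jbR_pos ξ).le _
    rcases List.eq_nil_or_concat L with rfl | ⟨L', k, rfl⟩
    · refine (hC i x ξ).trans ?_
      exact mul_le_mul_of_nonneg_right (mul_le_mul_of_nonneg_right (by linarith) (h0 i)) (hj _)
    · rw [List.concat_eq_append, mderiv_append, nXi_append]
      have hl : L'.length ≤ p := by simpa using hL
      refine (hCk k L' hl i x ξ).trans ?_
      have e : m - ordK k - nXi L' = m - (nXi L' + ordK k) := by ring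
      rw [e]
      exact mul_le_mul_of_nonneg_right
        (mul_le_mul_of_nonneg_right (by linarith [hs k]) (h0 i)) (hj _)

lemma Cls.symNorm_le {p : ℕ} (h0 : ∀ i, 0 ≤ w i) {m : ℝ} {a : ι → Sym d} (h : Cls w p m a) :
    ∃ C : ℝ, 0 ≤ C ∧ ∀ i, symNorm m p (a i) ≤ C * w i := by
  obtain ⟨C, hC0, hC⟩ := h.mderiv_bound h0
  refine ⟨C, hC0, fun i => Real.sSup_le ?_ (mul_nonneg hC0 (h0 i))⟩
  rintro r ⟨L, x, ξ, hL, rfl⟩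
  have := mul_le_mul_of_nonneg_left (hC L hL i x ξ)
    (Real.rpow_nonneg (jbR_pos ξ).le (-m + (nXi L : ℝ)))
  refine this.trans (le_of_eq ?_)
  have e : jbR ξ ^ (-m + (nXi L : ℝ)) * jbR ξ ^ (m - (nXi L : ℝ)) = 1 := by
    rw [← Real.rpow_add (jbR_pos ξ)]; simp
  calc _ = C * w i * (jbR ξ ^ (-m + (nXi L : ℝ)) * jbR ξ ^ (m - (nXi L : ℝ))) := by ring
    _ = _ := by rw [e, mul_one]

end

section
variable {ι : Type} {w w₁ w₂ : ι → ℝ}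

lemma fderiv_wd {n : ℕ} (G : (Fin n → ℂ) → ℂ) (y v : Fin n → ℂ) :
    fderiv ℝ G y v = ∑ j, (wdP j G y * v j + wdM j G y * (starRingEnd ℂ) (v j)) := by
  have hv : v = ∑ j, ((v j).re • (Pi.single j (1 : ℂ) : Fin n → ℂ)
      + (v j).im • (Pi.single j Complex.I : Fin n → ℂ)) := by
    funext i
    rw [Finset.sum_apply]
    rw [Finset.sum_eq_single i]
    · simp [Complex.re_add_im]
    · intro b _ hb; simp [hb.symm]
    · simp
  conv_lhs => rw [hv]
  rw [map_sum]
  refine Finset.sum_congr rfl fun j _ => ?_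
  rw [map_add, map_smul, map_smul]
  unfold wdP wdM
  have e1 : (v j) = ((v j).re : ℂ) + (v j).im * Complex.I := (Complex.re_add_im _).symm
  have e2 : (starRingEnd ℂ) (v j) = ((v j).re : ℂ) - (v j).im * Complex.I := by
    apply Complex.ext <;> simp
  rw [e2]
  generalize fderiv ℝ G y (Pi.single j 1) = A
  generalize fderiv ℝ G y (Pi.single j Complex.I) = B
  rw [Complex.real_smul, Complex.real_smul]
  generalize hr : (v j).re = r at *
  generalize hs : (v j).im = t at *
  rw [e1]
  linear_combination ((t : ℂ) * B) * Complex.I_sq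

lemma contDiffOn_wdP {n : ℕ} {Ω : Set (Fin n → ℂ)} (hΩ : IsOpen Ω) {G : (Fin n → ℂ) → ℂ}
    (hG : ContDiffOn ℝ (⊤ : ℕ∞) G Ω) (j : Fin n) : ContDiffOn ℝ (⊤ : ℕ∞) (wdP j G) Ω := by
  have h := hG.fderiv_of_isOpen hΩ (m := (⊤ : ℕ∞)) (by simp)
  unfold wdP
  exact ((h.clm_apply contDiffOn_const).sub
    (contDiffOn_const.mul (h.clm_apply contDiffOn_const))).div_const _

lemma contDiffOn_wdM {n : ℕ} {Ω : Set (Fin n → ℂ)} (hΩ : IsOpen Ω) {G : (Fin n → ℂ) → ℂ}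
    (hG : ContDiffOn ℝ (⊤ : ℕ∞) G Ω) (j : Fin n) : ContDiffOn ℝ (⊤ : ℕ∞) (wdM j G) Ω := by
  have h := hG.fderiv_of_isOpen hΩ (m := (⊤ : ℕ∞)) (by simp)
  unfold wdM
  exact ((h.clm_apply contDiffOn_const).add
    (contDiffOn_const.mul (h.clm_apply contDiffOn_const))).div_const _

lemma PD_comp {n : ℕ} {G : (Fin n → ℂ) → ℂ} {z : Fin n → Sym d} (hz : ∀ j, PD (z j))
    (hG : ∀ x ξ, DifferentiableAt ℝ G (fun j => z j x ξ)) :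
    PD (fun x ξ => G (fun j => z j x ξ)) := by
  constructor
  · intro x ξ
    exact (hG x ξ).comp x (f := fun y => fun j => z j y ξ)
      (differentiableAt_pi.2 fun j => (hz j).1 x ξ)
  · intro x ξ
    exact (hG x ξ).comp ξ (f := fun y => fun j => z j x y)
      (differentiableAt_pi.2 fun j => (hz j).2 x ξ)

lemma DD_comp {n : ℕ} {G : (Fin n → ℂ) → ℂ} {z : Fin n → Sym d} (hz : ∀ j, PD (z j))
    (hG : ∀ x ξ, DifferentiableAt ℝ G (fun j => z j x ξ)) (k) (x ξ : Vec d) :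
    DD k (fun x ξ => G (fun j => z j x ξ)) x ξ =
      ∑ j, (wdP j G (fun j => z j x ξ) * DD k (z j) x ξ
        + wdM j G (fun j => z j x ξ) * starSym (DD k (z j)) x ξ) := by
  cases k with
  | inl l =>
    have h1 : HasFDerivAt (fun y => fun j => z j y ξ)
        (ContinuousLinearMap.pi fun j => fderiv ℝ (fun y => z j y ξ) x) x :=
      hasFDerivAt_pi.2 fun j => ((hz j).1 x ξ).hasFDerivAt
    have h2 := (hG x ξ).hasFDerivAt.comp x h1
    have h3 : fderiv ℝ (fun y => G (fun j => z j y ξ)) x = _ := h2.fderiv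
    simp only [DD, pdx, starSym]
    rw [h3, ContinuousLinearMap.comp_apply, fderiv_wd]
    rfl
  | inr l =>
    have h1 : HasFDerivAt (fun y => fun j => z j x y)
        (ContinuousLinearMap.pi fun j => fderiv ℝ (fun y => z j x y) ξ) ξ :=
      hasFDerivAt_pi.2 fun j => ((hz j).2 x ξ).hasFDerivAt
    have h2 := (hG x ξ).hasFDerivAt.comp ξ h1
    have h3 : fderiv ℝ (fun y => G (fun j => z j x y)) ξ = _ := h2.fderiv
    simp only [DD, pdxi, starSym]
    rw [h3, ContinuousLinearMap.comp_apply, fderiv_wd]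
    rfl

lemma diffAt_of_mem {n : ℕ} {Ω : Set (Fin n → ℂ)} (hΩ : IsOpen Ω) {G : (Fin n → ℂ) → ℂ}
    (hG : ContDiffOn ℝ (⊤ : ℕ∞) G Ω) {y} (hy : y ∈ Ω) : DifferentiableAt ℝ G y :=
  (hG.differentiableOn (by simp)).differentiableAt (hΩ.mem_nhds hy)

lemma Bnd.comp {n : ℕ} {Ω Q : Set (Fin n → ℂ)} (hQ : IsCompact Q)
    (hQΩ : Q ⊆ Ω) {G : (Fin n → ℂ) → ℂ} (hG : ContDiffOn ℝ (⊤ : ℕ∞) G Ω)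
    {z : Fin n → ι → Sym d} (hzQ : ∀ i x ξ, (fun j => z j i x ξ) ∈ Q) :
    Bnd (fun _ => 1) 0 (fun i x ξ => G (fun j => z j i x ξ)) := by
  obtain ⟨C, hC⟩ := hQ.exists_bound_of_continuousOn (hG.continuousOn.mono hQΩ)
  exact ⟨C, fun i x ξ => by simpa using hC _ (hzQ i x ξ)⟩

/-- composition, weight one -/
lemma Cls.comp {n : ℕ} {Ω Q : Set (Fin n → ℂ)} (hΩ : IsOpen Ω) (hQ : IsCompact Q)
    (hQΩ : Q ⊆ Ω) {z : Fin n → ι → Sym d} (hzQ : ∀ i x ξ, (fun j => z j i x ξ) ∈ Q) {p : ℕ} :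
    (∀ j, Cls (fun _ => 1) p 0 (z j)) →
    ∀ {G : (Fin n → ℂ) → ℂ}, ContDiffOn ℝ (⊤ : ℕ∞) G Ω →
    Cls (fun _ => 1) p 0 (fun i x ξ => G (fun j => z j i x ξ)) := by
  induction p with
  | zero => intro hz G hG; exact Bnd.comp hQ hQΩ hG hzQ
  | succ p ih =>
    intro hz G hG
    have hd : ∀ i x ξ, DifferentiableAt ℝ G (fun j => z j i x ξ) := fun i x ξ =>
      diffAt_of_mem hΩ hG (hQΩ (hzQ i x ξ))
    refine ⟨Bnd.comp hQ hQΩ hG hzQ, fun i => PD_comp (fun j => (hz j).2.1 i) (hd i), fun k => ?_⟩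
    have key : ∀ j, Cls (fun _ => 1) p (0 - ordK k) (fun i x ξ =>
        wdP j G (fun j => z j i x ξ) * DD k (z j i) x ξ
        + wdM j G (fun j => z j i x ξ) * starSym (DD k (z j i)) x ξ) := by
      intro j
      have h1 := (ih (fun j => (hz j).pred) (contDiffOn_wdP hΩ hG j)).mul ((hz j).2.2 k)
      have h2 := (ih (fun j => (hz j).pred) (contDiffOn_wdM hΩ hG j)).mul ((hz j).2.2 k).star
      have h3 := Cls.of_one_mul (h1.add h2)
      exact h3.cast (by ring) fun _ _ _ => rfl
    exact (Cls.sum Finset.univ key).cast rfl fun i x ξ =>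
      (DD_comp (fun j => (hz j).2.1 i) (hd i) k x ξ).symm

/-- composition with a function vanishing at zero -/
lemma Cls.comp_zero {n : ℕ} {Ω Q : Set (Fin n → ℂ)} (hΩ : IsOpen Ω) (hQ : IsCompact Q)
    (hQc : Convex ℝ Q) (hQ0 : (0 : Fin n → ℂ) ∈ Q)
    (hQΩ : Q ⊆ Ω) {z : Fin n → ι → Sym d} (hzQ : ∀ i x ξ, (fun j => z j i x ξ) ∈ Q) {p : ℕ}
    (h0 : ∀ i, 0 ≤ w i) (K : ℝ) (hK : ∀ i, w i ≤ K)
    (hz : ∀ j, Cls w p 0 (z j)) {G : (Fin n → ℂ) → ℂ} (hG : ContDiffOn ℝ (⊤ : ℕ∞) G Ω)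
    (hG0 : G 0 = 0) :
    Cls w p 0 (fun i x ξ => G (fun j => z j i x ξ)) := by
  have hd : ∀ i x ξ, DifferentiableAt ℝ G (fun j => z j i x ξ) := fun i x ξ =>
    diffAt_of_mem hΩ hG (hQΩ (hzQ i x ξ))
  have hb : Bnd w 0 (fun i x ξ => G (fun j => z j i x ξ)) := by
    have hc : ContinuousOn (fun y => fderiv ℝ G y) Q :=
      (hG.continuousOn_fderiv_of_isOpen hΩ (by simp)).mono hQΩ
    obtain ⟨C, hC⟩ := hQ.exists_bound_of_continuousOn hc
    choose D hD using fun j => (hz j).bnd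
    refine ⟨C * ∑ j, |D j|, fun i x ξ => ?_⟩
    have hC0 : 0 ≤ C := (norm_nonneg _).trans (hC 0 hQ0)
    have h := hQc.norm_image_sub_le_of_norm_fderiv_le (𝕜 := ℝ) (f := G) (C := C)
      (fun y hy => diffAt_of_mem hΩ hG (hQΩ hy)) hC hQ0 (hzQ i x ξ)
    rw [hG0, sub_zero, sub_zero] at h
    have h2 : ‖(fun j => z j i x ξ)‖ ≤ (∑ j, |D j|) * w i := by
      rw [pi_norm_le_iff_of_nonneg (mul_nonneg (Finset.sum_nonneg fun _ _ => abs_nonneg _) (h0 i))]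
      intro j
      have h3 := hD j i x ξ
      rw [Real.rpow_zero, mul_one] at h3
      refine h3.trans (mul_le_mul_of_nonneg_right ((le_abs_self _).trans ?_) (h0 i))
      exact Finset.single_le_sum (f := fun j => |D j|) (fun _ _ => abs_nonneg _) (Finset.mem_univ j)
    rw [Real.rpow_zero, mul_one, mul_assoc]
    exact h.trans (mul_le_mul_of_nonneg_left h2 hC0)
  cases p with
  | zero => exact hb
  | succ p =>
    refine ⟨hb, fun i => PD_comp (fun j => (hz j).2.1 i) (hd i), fun k => ?_⟩
    have hz1 : ∀ j, Cls (fun _ => 1) p 0 (z j) := fun j =>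
      (hz j).pred.weight K h0 (fun i => by simpa using hK i)
    have key : ∀ j, Cls w p (0 - ordK k) (fun i x ξ =>
        wdP j G (fun j => z j i x ξ) * DD k (z j i) x ξ
        + wdM j G (fun j => z j i x ξ) * starSym (DD k (z j i)) x ξ) := by
      intro j
      have h1 := (Cls.comp hΩ hQ hQΩ hzQ hz1 (contDiffOn_wdP hΩ hG j)).mul ((hz j).2.2 k)
      have h2 := (Cls.comp hΩ hQ hQΩ hzQ hz1 (contDiffOn_wdM hΩ hG j)).mul ((hz j).2.2 k).star
      have h3 := Cls.of_one_mul (h1.add h2)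
      exact h3.cast (by ring) fun _ _ _ => rfl
    exact (Cls.sum Finset.univ key).cast rfl fun i x ξ =>
      (DD_comp (fun j => (hz j).2.1 i) (hd i) k x ξ).symm

end

section
variable {ι : Type} {w w₁ w₂ : ι → ℝ}

def nsq (ξ : Vec d) : ℝ := ∑ i, (ξ i) ^ 2

lemma nsq_nonneg (ξ : Vec d) : 0 ≤ nsq ξ := Finset.sum_nonneg fun _ _ => sq_nonneg _

lemma jbR_sq (ξ : Vec d) : jbR ξ ^ 2 = 1 + nsq ξ :=
  Real.sq_sqrt (by have := nsq_nonneg ξ; unfold nsq at this; linarith)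

lemma abs_le_jbR (ξ : Vec d) (j : Fin d) : |ξ j| ≤ jbR ξ := by
  apply abs_le_of_sq_le_sq _ (jbR_pos ξ).le
  rw [jbR_sq]
  have : (ξ j) ^ 2 ≤ nsq ξ :=
    Finset.single_le_sum (f := fun i => (ξ i) ^ 2) (fun i _ => sq_nonneg _) (Finset.mem_univ j)
  linarith

def xiS (j : Fin d) : Sym d := fun _ ξ => ((ξ j : ℝ) : ℂ)

lemma hasFDerivAt_xi (j : Fin d) (ξ : Vec d) :
    HasFDerivAt (fun η : Vec d => ((η j : ℝ) : ℂ))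
      (Complex.ofRealCLM.comp (ContinuousLinearMap.proj j : Vec d →L[ℝ] ℝ)) ξ :=
  (Complex.ofRealCLM.comp (ContinuousLinearMap.proj j : Vec d →L[ℝ] ℝ)).hasFDerivAt

lemma PD_xi (j : Fin d) : PD (xiS j) :=
  ⟨fun _ _ => differentiableAt_const _, fun _ ξ => (hasFDerivAt_xi j ξ).differentiableAt⟩

lemma Cls_xi {p : ℕ} (j : Fin d) : Cls (fun _ => 1) p 1 (fun _ => xiS j : ι → Sym d) := by
  have hb : Bnd (fun _ => 1) 1 (fun _ => xiS j : ι → Sym d) := by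
    refine ⟨1, fun i x ξ => ?_⟩
    simpa [xiS] using abs_le_jbR ξ j
  cases p with
  | zero => exact hb
  | succ p =>
    refine ⟨hb, fun _ => PD_xi j, fun k => ?_⟩
    cases k with
    | inl l =>
      exact Cls.zero.cast rfl fun i x ξ => by simp [DD, pdx, xiS]
    | inr l =>
      refine (Cls.const (if j = l then 1 else 0)).cast (by simp [ordK]) fun i x ξ => ?_
      simp only [DD, pdxi, xiS]
      rw [(hasFDerivAt_xi j ξ).fderiv]
      simp [Pi.single_apply]
      split_ifs <;> simp

def tauR (ξ : Vec d) : ℝ := (1 + nsq ξ)⁻¹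
def tauS : Sym d := fun _ ξ => ((tauR ξ : ℝ) : ℂ)

lemma hasFDerivAt_nsq (ξ : Vec d) :
    HasFDerivAt (nsq (d := d))
      (∑ i, (2 * ξ i) • (ContinuousLinearMap.proj i : Vec d →L[ℝ] ℝ)) ξ := by
  unfold nsq
  refine HasFDerivAt.fun_sum fun i _ => ?_
  have h := ((ContinuousLinearMap.proj i : Vec d →L[ℝ] ℝ).hasFDerivAt (x := ξ)).pow 2
  simpa using h

lemma hasFDerivAt_tau (ξ : Vec d) :
    HasFDerivAt (fun η : Vec d => ((tauR η : ℝ) : ℂ))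
      (Complex.ofRealCLM.comp ((-((1 + nsq ξ) ^ 2)⁻¹) •
        (∑ i, (2 * ξ i) • (ContinuousLinearMap.proj i : Vec d →L[ℝ] ℝ)))) ξ := by
  have h1 : HasFDerivAt (fun η : Vec d => 1 + nsq η) _ ξ := (hasFDerivAt_nsq ξ).const_add 1
  have hne : (1 + nsq ξ) ≠ 0 := by have := nsq_nonneg ξ; positivity
  have h2 := (hasDerivAt_inv hne).comp_hasFDerivAt ξ h1
  exact Complex.ofRealCLM.hasFDerivAt.comp ξ h2

lemma PD_tau : PD (tauS : Sym d) :=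
  ⟨fun _ _ => differentiableAt_const _, fun _ ξ => (hasFDerivAt_tau ξ).differentiableAt⟩

lemma tauR_nonneg (ξ : Vec d) : 0 ≤ tauR ξ := by
  have := nsq_nonneg ξ; unfold tauR; positivity

lemma tauR_eq (ξ : Vec d) : tauR ξ = jbR ξ ^ (-2 : ℝ) := by
  rw [Real.rpow_neg (jbR_pos ξ).le, Real.rpow_two, jbR_sq]; rfl

lemma Cls_tau {p : ℕ} : Cls (fun _ => 1) p (-2) (fun _ => tauS : ι → Sym d) := by
  have hb : Bnd (fun _ => 1) (-2) (fun _ => tauS : ι → Sym d) := by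
    refine ⟨1, fun i x ξ => ?_⟩
    rw [← tauR_eq]
    simp [tauS, abs_of_nonneg (tauR_nonneg ξ)]
  induction p with
  | zero => exact hb
  | succ p ih =>
    refine ⟨hb, fun _ => PD_tau, fun k => ?_⟩
    cases k with
    | inl l =>
      exact Cls.zero.cast rfl fun i x ξ => by simp [DD, pdx, tauS]
    | inr l =>
      have h := ((Cls_xi (ι := ι) (p := p) l).mul (ih.mul ih)).smul (-2)
      have h' : Cls (fun _ => 1) p (1 + (-2 + -2)) (fun (_ : ι) x ξ => -2 * (xiS l x ξ * (tauS x ξ * tauS x ξ))) := by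
        simpa using h
      refine h'.cast (by simp [ordK]; norm_num) fun i x ξ => ?_
      simp only [DD, pdxi, tauS]
      rw [(hasFDerivAt_tau ξ).fderiv]
      simp [Pi.single_apply, xiS, tauR]
      rw [← inv_pow]
      ring

/-- the profile -/
def thetaF (χ : ℝ → ℝ) (R : ℝ) (τ : ℝ) : ℝ :=
  if τ ≤ 0 then (1 - τ)⁻¹ else (1 - χ (Real.sqrt (τ⁻¹ - 1) / R)) * (1 - τ)⁻¹

lemma contDiff_theta {χ : ℝ → ℝ} (hχ : IsCutoff χ) {R : ℝ} (hR : 0 < R) :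
    ContDiff ℝ (⊤ : ℕ∞) (thetaF χ R) := by
  rw [contDiff_iff_contDiffAt]
  intro τ
  rcases le_or_gt τ 0 with h | h
  · -- near nonpositive points
    have hc : 0 < (1 + (8 / 5 * R) ^ 2)⁻¹ := by positivity
    have hev : thetaF χ R =ᶠ[nhds τ] fun t => (1 - t)⁻¹ := by
      filter_upwards [Iio_mem_nhds (lt_of_le_of_lt h hc)] with t ht
      unfold thetaF
      split_ifs with h0
      · rfl
      · push Not at h0
        have h1 : (1 + (8 / 5 * R) ^ 2) < t⁻¹ := by
          rw [Set.mem_Iio] at ht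
          rwa [lt_inv_comm₀ (by positivity) h0]
        have h2 : 8 / 5 * R ≤ Real.sqrt (t⁻¹ - 1) := Real.le_sqrt_of_sq_le (by linarith)
        have h3 : 8 / 5 ≤ |Real.sqrt (t⁻¹ - 1) / R| := by
          rw [abs_of_nonneg (by positivity), le_div_iff₀ hR]; exact h2
        rw [hχ.eq_zero _ h3]; ring
    refine ContDiffAt.congr_of_eventuallyEq ?_ hev
    exact (contDiffAt_const.sub contDiffAt_id).inv (by simp; linarith)
  · rcases lt_or_ge τ 1 with h1 | h1
    · have hev : thetaF χ R =ᶠ[nhds τ]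
          fun t => (1 - χ (Real.sqrt (t⁻¹ - 1) / R)) * (1 - t)⁻¹ := by
        filter_upwards [Ioi_mem_nhds h] with t ht
        unfold thetaF
        rw [if_neg (not_le.2 ht)]
      refine ContDiffAt.congr_of_eventuallyEq ?_ hev
      have hpos : τ⁻¹ - 1 ≠ 0 := by
        have := (one_lt_inv₀ h).2 h1
        linarith
      have hs : ContDiffAt ℝ (⊤ : ℕ∞) (fun t : ℝ => Real.sqrt (t⁻¹ - 1)) τ :=
        ((contDiffAt_id.inv h.ne').sub contDiffAt_const).sqrt hpos
      have hx : ContDiffAt ℝ (⊤ : ℕ∞) (fun t : ℝ => χ (Real.sqrt (t⁻¹ - 1) / R)) τ :=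
        hχ.smooth.contDiffAt.comp τ (hs.div_const R)
      exact (contDiffAt_const.sub hx).mul
        ((contDiffAt_const.sub contDiffAt_id).inv (by simp; linarith))
    · have hc : (1 + (5 / 4 * R) ^ 2)⁻¹ < 1 := inv_lt_one_of_one_lt₀ (by
        have : 0 < (5 / 4 * R) ^ 2 := by positivity
        linarith)
      have hev : thetaF χ R =ᶠ[nhds τ] fun t => (0 : ℝ) := by
        filter_upwards [Ioi_mem_nhds (lt_of_lt_of_le hc h1), Ioi_mem_nhds h] with t ht ht0
        rw [Set.mem_Ioi] at ht ht0
        unfold thetaF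
        rw [if_neg (not_le.2 ht0)]
        have h1 : t⁻¹ < (1 + (5 / 4 * R) ^ 2) := by
          rwa [inv_lt_comm₀ ht0 (by positivity)]
        have h2 : Real.sqrt (t⁻¹ - 1) ≤ 5 / 4 * R := Real.sqrt_le_iff.2 ⟨by positivity, by linarith⟩
        have h3 : |Real.sqrt (t⁻¹ - 1) / R| ≤ 5 / 4 := by
          rw [abs_of_nonneg (by positivity), div_le_iff₀ hR]; exact h2
        rw [hχ.eq_one _ h3]; ring
      exact ContDiffAt.congr_of_eventuallyEq contDiffAt_const hev

lemma mult_eq (χ : ℝ → ℝ) (hχ : IsCutoff χ) (R : ℝ) (ξ : Vec d) :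
    ((rnorm ξ) ^ 2)⁻¹ * cutXR χ R ξ = tauR ξ * thetaF χ R (tauR ξ) := by
  have hn := nsq_nonneg ξ
  have h1 : rnorm ξ ^ 2 = nsq ξ := Real.sq_sqrt hn
  have h2 : rnorm ξ = Real.sqrt (nsq ξ) := rfl
  have ht : 0 < tauR ξ := by unfold tauR; positivity
  unfold thetaF cutXR
  rw [if_neg (not_le.2 ht), h1, h2]
  have h3 : (tauR ξ)⁻¹ - 1 = nsq ξ := by simp [tauR]
  rw [h3]
  rcases hn.eq_or_lt with h0 | h0
  · rw [← h0]; simp [hχ.eq_one 0 (by norm_num)]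
  · have : tauR ξ * (1 - tauR ξ)⁻¹ = (nsq ξ)⁻¹ := by
      have hne : (1 + nsq ξ) ≠ 0 := by positivity
      have e : 1 - tauR ξ = nsq ξ * (1 + nsq ξ)⁻¹ := by unfold tauR; field_simp; ring
      rw [e]; unfold tauR; field_simp
    rw [← this]; ring

lemma Cls_mult {p : ℕ} {χ : ℝ → ℝ} (hχ : IsCutoff χ) {R : ℝ} (hR : 0 < R) (j k : Fin d) :
    Cls (fun _ => 1) p 0 (fun _ _ ξ =>
      ((((rnorm ξ) ^ 2)⁻¹ * cutXR χ R ξ : ℝ) : ℂ) * ((ξ j * ξ k : ℝ) : ℂ) : ι → Sym d) := by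
  have ht : Cls (fun _ => 1) p 0 (fun _ => tauS : ι → Sym d) :=
    Cls_tau.order (fun _ => zero_le_one) (by norm_num)
  have hth : Cls (fun _ => 1) p 0 (fun _ _ ξ => ((thetaF χ R (tauR ξ) : ℝ) : ℂ) : ι → Sym d) := by
    have hG : ContDiff ℝ (⊤ : ℕ∞) (fun z : Fin 1 → ℂ => ((thetaF χ R (z 0).re : ℝ) : ℂ)) := by
      refine Complex.ofRealCLM.contDiff.comp ((contDiff_theta hχ hR).comp ?_)
      exact Complex.reCLM.contDiff.comp (contDiff_apply ℝ ℂ (0 : Fin 1))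
    have := Cls.comp (d := d) (ι := ι) (p := p) (Ω := Set.univ)
      (Q := Metric.closedBall (0 : Fin 1 → ℂ) 1) isOpen_univ
      (isCompact_closedBall _ _) (Set.subset_univ _) (z := fun _ _ => tauS) ?_ (fun _ => ht)
      hG.contDiffOn
    · exact this.cast rfl fun i x ξ => by simp [tauS]
    · intro i x ξ
      rw [mem_closedBall_zero_iff, pi_norm_le_iff_of_nonneg zero_le_one]
      intro j
      have hn := nsq_nonneg ξ
      have : tauR ξ ≤ 1 := inv_le_one_of_one_le₀ (by linarith)
      simpa [tauS, abs_of_nonneg (tauR_nonneg ξ)] using this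
  have h := ((Cls_tau (ι := ι) (p := p)).mul hth).mul ((Cls_xi j).mul (Cls_xi (ι := ι) (p := p) k))
  have h' : Cls (fun _ => 1) p (-2 + 0 + (1 + 1)) (fun (_ : ι) x ξ =>
    tauS x ξ * ((thetaF χ R (tauR ξ) : ℝ) : ℂ) * (xiS j x ξ * xiS k x ξ)) := by
    simpa only [mul_one] using h
  refine h'.cast (by norm_num) fun i x ξ => ?_
  rw [mult_eq χ hχ]
  simp [tauS, xiS]

end

section
variable {ι : Type} {w w₁ w₂ : ι → ℝ}

lemma summable_prod_fin {f : ℤ → ℝ} (hf : Summable f) (h0 : ∀ n, 0 ≤ f n) (d : ℕ) :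
    Summable (fun n : Fin d → ℤ => ∏ i, f (n i)) := by
  induction d with
  | zero => exact Summable.of_finite
  | succ d ih =>
    rw [← (Fin.consEquiv (fun _ : Fin (d + 1) => ℤ)).summable_iff]
    have h := hf.mul_of_nonneg ih h0 (fun n => Finset.prod_nonneg fun i _ => h0 _)
    refine h.congr fun n => ?_
    simp [Fin.consEquiv, Fin.prod_univ_succ]

lemma jb_one_le (n : Zd d) : 1 ≤ jb n := by
  unfold jb
  rw [Real.one_le_sqrt]
  have : 0 ≤ ∑ i, ((n i : ℝ)) ^ 2 := Finset.sum_nonneg fun i _ => sq_nonneg _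
  linarith

lemma jb_pos (n : Zd d) : 0 < jb n := lt_of_lt_of_le one_pos (jb_one_le n)

lemma jb_sq (n : Zd d) : jb n ^ 2 = 1 + ∑ i, ((n i : ℝ)) ^ 2 :=
  Real.sq_sqrt (by
    have : 0 ≤ ∑ i, ((n i : ℝ)) ^ 2 := Finset.sum_nonneg fun i _ => sq_nonneg _
    linarith)

lemma sq_le_jb_sq (n : Zd d) (j : Fin d) : 1 + (n j : ℝ) ^ 2 ≤ jb n ^ 2 := by
  rw [jb_sq]
  have : (n j : ℝ) ^ 2 ≤ ∑ i, ((n i : ℝ)) ^ 2 :=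
    Finset.single_le_sum (f := fun i => (n i : ℝ) ^ 2) (fun i _ => sq_nonneg _) (Finset.mem_univ j)
  linarith

lemma abs_le_jb (n : Zd d) (j : Fin d) : |(n j : ℝ)| ≤ jb n := by
  apply abs_le_of_sq_le_sq _ (jb_pos n).le
  linarith [sq_le_jb_sq n j]

lemma summable_jb {s₀ : ℕ} (hs : d + 1 ≤ s₀) : Summable (fun n : Zd d => (jb n ^ (2 * s₀))⁻¹) := by
  have h1 : Summable (fun n : ℤ => (1 + (n : ℝ) ^ 2)⁻¹) := by
    have h : Summable (fun n : ℤ => (1 / (n : ℝ) ^ 2)) :=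
      Real.summable_one_div_int_pow.2 (by norm_num)
    have h2 : Summable (fun n : ℤ => (1 / (n : ℝ) ^ 2) + if n = 0 then 1 else 0) := by
      refine h.add ?_
      refine summable_of_ne_finset_zero (s := {0}) fun b hb => ?_
      simp at hb; simp [hb]
    refine Summable.of_nonneg_of_le (fun n => by positivity) (fun n => ?_) h2
    by_cases hn : n = 0
    · subst hn; simp
    · rw [if_neg hn, add_zero, one_div]
      have : 0 < (n : ℝ) ^ 2 := by positivity
      exact inv_anti₀ this (by linarith)
  have h2 := summable_prod_fin h1 (fun n => by positivity) d
  refine Summable.of_nonneg_of_le (fun n => by have := jb_pos n; positivity) (fun n => ?_) h2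
  have h3 : ∏ i, (1 + (n i : ℝ) ^ 2) ≤ jb n ^ (2 * s₀) := by
    calc ∏ i, (1 + (n i : ℝ) ^ 2) ≤ ∏ i : Fin d, jb n ^ 2 :=
          Finset.prod_le_prod (fun i _ => by positivity) (fun i _ => sq_le_jb_sq n i)
      _ = jb n ^ (2 * d) := by simp [pow_mul]
      _ ≤ jb n ^ (2 * s₀) := pow_le_pow_right₀ (jb_one_le n) (by omega)
  rw [Finset.prod_inv_distrib]
  exact inv_anti₀ (Finset.prod_pos fun i _ => by positivity) h3

def ee (n : Zd d) (x : Vec d) : ℂ := Complex.exp (Complex.I * ((∑ i, (n i : ℝ) * x i : ℝ) : ℂ))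

lemma norm_ee (n : Zd d) (x : Vec d) : ‖ee n x‖ = 1 := by
  unfold ee
  rw [mul_comm]; exact Complex.norm_exp_ofReal_mul_I _

def linN (n : Zd d) : Vec d →L[ℝ] ℝ :=
  ∑ i, (n i : ℝ) • (ContinuousLinearMap.proj i : Vec d →L[ℝ] ℝ)

lemma linN_apply (n : Zd d) (x : Vec d) : linN n x = ∑ i, (n i : ℝ) * x i := by
  simp [linN, sum_apply]

lemma norm_linN (n : Zd d) : ‖linN n‖ ≤ d * jb n := by
  refine ContinuousLinearMap.opNorm_le_bound _ (by have := jb_pos n; positivity) fun x => ?_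
  rw [linN_apply]
  calc ‖∑ i, (n i : ℝ) * x i‖ ≤ ∑ i : Fin d, jb n * ‖x‖ := by
        refine norm_sum_le_of_le _ fun i _ => ?_
        rw [norm_mul]
        exact mul_le_mul (abs_le_jb n i) (norm_le_pi_norm x i) (norm_nonneg _) (jb_pos n).le
    _ = d * jb n * ‖x‖ := by simp; ring

lemma hasFDerivAt_ee (n : Zd d) (x : Vec d) :
    HasFDerivAt (ee n) ((ee n x * Complex.I) • (Complex.ofRealCLM.comp (linN n))) x := by
  have h1 : HasFDerivAt (fun y : Vec d => ((∑ i, (n i : ℝ) * y i : ℝ) : ℂ))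
      (Complex.ofRealCLM.comp (linN n)) x := by
    have := (Complex.ofRealCLM.comp (linN n)).hasFDerivAt (x := x)
    refine this.congr_of_eventuallyEq (Eventually.of_forall fun y => ?_)
    simp [linN_apply]
  have h2 := (h1.const_mul Complex.I).cexp
  refine h2.congr_fderiv ?_
  rw [smul_smul]; rfl

def TT (c : Seq d) : Fn d := fun x => ∑' n, c n * ee n x

lemma hasFDerivAt_TT {c : Seq d} (hc : Summable fun n => jb n * ‖c n‖) (x : Vec d) :
    HasFDerivAt (TT c) (∑' n, c n • ((ee n x * Complex.I) • (Complex.ofRealCLM.comp (linN n)))) x := by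
  have hc' : Summable fun n => ‖c n‖ := Summable.of_nonneg_of_le (fun n => norm_nonneg _)
    (fun n => le_mul_of_one_le_left (norm_nonneg _) (jb_one_le n)) hc
  refine hasFDerivAt_tsum (𝕜 := ℝ) (u := fun n => d * (jb n * ‖c n‖)) (hc.mul_left _)
    (f := fun n x => c n * ee n x)
    (f' := fun n x => c n • ((ee n x * Complex.I) • (Complex.ofRealCLM.comp (linN n))))
    (fun n x => (hasFDerivAt_ee n x).const_mul (c n)) (fun n x => ?_) (x₀ := 0) ?_ x
  · rw [norm_smul, norm_smul, norm_mul, norm_ee, Complex.norm_I]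
    have h1 : ‖Complex.ofRealCLM.comp (linN n)‖ ≤ d * jb n := by
      refine (ContinuousLinearMap.opNorm_comp_le _ _).trans ?_
      rw [Complex.ofRealCLM_norm, one_mul]; exact norm_linN n
    calc _ = ‖c n‖ * ‖Complex.ofRealCLM.comp (linN n)‖ := by ring
      _ ≤ ‖c n‖ * (d * jb n) := mul_le_mul_of_nonneg_left h1 (norm_nonneg _)
      _ = _ := by ring
  · refine Summable.of_norm ?_
    simpa [norm_ee] using hc'

lemma pdF_TT {c : Seq d} (hc : Summable fun n => jb n * ‖c n‖) (j : Fin d) :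
    pdF j (TT c) = TT (fun n => Complex.I * ((n j : ℝ) : ℂ) * c n) := by
  funext x
  unfold pdF
  rw [(hasFDerivAt_TT hc x).fderiv]
  have hs : Summable fun n => c n • ((ee n x * Complex.I) • (Complex.ofRealCLM.comp (linN n))) := by
    refine Summable.of_norm (Summable.of_nonneg_of_le (fun n => norm_nonneg _) (fun n => ?_)
      (hc.mul_left (d : ℝ)))
    rw [norm_smul, norm_smul, norm_mul, norm_ee, Complex.norm_I]
    have h1 : ‖Complex.ofRealCLM.comp (linN n)‖ ≤ d * jb n := by
      refine (ContinuousLinearMap.opNorm_comp_le _ _).trans ?_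
      rw [Complex.ofRealCLM_norm, one_mul]; exact norm_linN n
    calc _ = ‖c n‖ * ‖Complex.ofRealCLM.comp (linN n)‖ := by ring
      _ ≤ ‖c n‖ * (d * jb n) := mul_le_mul_of_nonneg_left h1 (norm_nonneg _)
      _ = _ := by ring
  have := (ContinuousLinearMap.apply ℝ ℂ (Pi.single j (1 : ℝ) : Vec d)).map_tsum hs
  rw [ContinuousLinearMap.apply_apply] at this
  rw [this]
  refine tsum_congr fun n => ?_
  simp [linN_apply, Pi.single_apply]
  ring

lemma TT_Cls {p : ℕ} : ∀ {c : ι → Seq d}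
    (_ : ∀ i, Summable fun n => jb n ^ p * ‖c i n‖)
    (_ : ∃ C : ℝ, ∀ i, ∑' n, jb n ^ p * ‖c i n‖ ≤ C * w i),
    Cls w p 0 (fun i x _ => TT (c i) x) := by
  have hb : ∀ {p : ℕ} {c : ι → Seq d}
    (_ : ∀ i, Summable fun n => jb n ^ p * ‖c i n‖)
    (_ : ∃ C : ℝ, ∀ i, ∑' n, jb n ^ p * ‖c i n‖ ≤ C * w i),
    Bnd w 0 (fun i x (_ : Vec d) => TT (c i) x) := by
    rintro p c hs ⟨C, hC⟩
    refine ⟨C, fun i x ξ => ?_⟩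
    rw [Real.rpow_zero, mul_one]
    refine le_trans ?_ (hC i)
    have hle : ∀ n, ‖c i n * ee n x‖ ≤ jb n ^ p * ‖c i n‖ := fun n => by
      rw [norm_mul, norm_ee, mul_one]
      exact le_mul_of_one_le_left (norm_nonneg _) (one_le_pow₀ (jb_one_le n))
    exact tsum_of_norm_bounded (hs i).hasSum hle
  induction p with
  | zero => intro c h1 h2; exact hb h1 h2
  | succ p ih =>
    intro c h1 h2
    have h3 : ∀ i, Summable fun n => jb n * ‖c i n‖ := fun i =>
      Summable.of_nonneg_of_le (fun n => mul_nonneg (jb_pos n).le (norm_nonneg _)) (fun n => by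
        refine mul_le_mul_of_nonneg_right ?_ (norm_nonneg _)
        exact le_self_pow₀ (jb_one_le n) (by omega)) (h1 i)
    refine ⟨hb h1 h2, fun i => ⟨fun x ξ => (hasFDerivAt_TT (h3 i) x).differentiableAt,
      fun x ξ => differentiableAt_const _⟩, fun k => ?_⟩
    cases k with
    | inr l => exact Cls.zero.cast rfl fun i x ξ => by simp [DD, pdxi]
    | inl l =>
      have hle : ∀ i n, jb n ^ p * ‖Complex.I * ((n l : ℝ) : ℂ) * c i n‖ ≤ jb n ^ (p + 1) * ‖c i n‖ := by
        intro i n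
        rw [norm_mul, norm_mul, Complex.norm_I, one_mul, Complex.norm_real, pow_succ, mul_assoc]
        exact mul_le_mul_of_nonneg_left
          (mul_le_mul_of_nonneg_right (abs_le_jb n l) (norm_nonneg _)) (pow_nonneg (jb_pos n).le _)
      have h1' : ∀ i, Summable fun n => jb n ^ p * ‖Complex.I * ((n l : ℝ) : ℂ) * c i n‖ := fun i =>
        Summable.of_nonneg_of_le
          (fun n => mul_nonneg (pow_nonneg (jb_pos n).le _) (norm_nonneg _)) (hle i) (h1 i)
      have h := ih (c := fun i n => Complex.I * ((n l : ℝ) : ℂ) * c i n) h1' (by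
        obtain ⟨C, hC⟩ := h2
        exact ⟨C, fun i => ((h1' i).tsum_le_tsum (hle i) (h1 i)).trans (hC i)⟩)
      refine h.cast (by simp [ordK]) fun i x ξ => ?_
      exact (congrFun (pdF_TT (h3 i) l) x).symm

lemma sum_le_sob {s₀ : ℕ} (hs : d + 1 ≤ s₀) (q : ℕ) : ∃ C : ℝ, ∀ c : Seq d,
    InHsSeq ((q : ℝ) + s₀) c → Summable (fun n => jb n ^ q * ‖c n‖) ∧
      ∑' n, jb n ^ q * ‖c n‖ ≤ C * hsNorm ((q : ℝ) + s₀) c := by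
  refine ⟨Real.sqrt (∑' n : Zd d, (jb n ^ (2 * s₀))⁻¹), fun c hc => ?_⟩
  have e : ∀ n : Zd d, jb n ^ (2 * ((q : ℝ) + s₀)) * ‖c n‖ ^ 2 = (jb n ^ (q + s₀) * ‖c n‖) ^ 2 := by
    intro n
    have : (2 * ((q : ℝ) + s₀)) = ((2 * (q + s₀) : ℕ) : ℝ) := by push_cast; ring
    rw [this, Real.rpow_natCast]; ring
  have e1 : ∀ n : Zd d, (jb n ^ (2 * s₀))⁻¹ = ((jb n ^ s₀)⁻¹) ^ 2 := by
    intro n; rw [inv_pow]; ring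
  have hf : Summable fun n : Zd d => ((jb n ^ s₀)⁻¹) ^ (2 : ℝ) := by
    refine (summable_jb hs).congr fun n => ?_
    rw [e1, Real.rpow_two]
  have hg : Summable fun n : Zd d => (jb n ^ (q + s₀) * ‖c n‖) ^ (2 : ℝ) := by
    refine Summable.congr hc fun n => ?_
    rw [e, Real.rpow_two]
  have h2 : Real.HolderConjugate 2 2 := Real.HolderConjugate.two_two
  have hf0 : ∀ n : Zd d, 0 ≤ (jb n ^ s₀)⁻¹ := fun n => by have := jb_pos n; positivity
  have hg0 : ∀ n : Zd d, 0 ≤ jb n ^ (q + s₀) * ‖c n‖ := fun n => by have := jb_pos n; positivity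
  have key : ∀ n : Zd d, (jb n ^ s₀)⁻¹ * (jb n ^ (q + s₀) * ‖c n‖) = jb n ^ q * ‖c n‖ := fun n => by
    have := jb_pos n
    rw [pow_add]; field_simp
  have hS := Real.summable_mul_of_Lp_Lq_of_nonneg h2 hf0 hg0 hf hg
  have hI := Real.inner_le_Lp_mul_Lq_tsum_of_nonneg h2 hf0 hg0 hf hg
  simp only [key] at hS hI
  refine ⟨hS, hI.trans (le_of_eq ?_)⟩
  unfold hsNorm hsNormSq
  simp only [e, e1, Real.rpow_two, Real.sqrt_eq_rpow]

lemma InHsSeq.mono {s s' : ℝ} {c : Seq d} (h : InHsSeq s c) (hs : s' ≤ s) : InHsSeq s' c := by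
  refine Summable.of_nonneg_of_le
    (fun n => mul_nonneg (Real.rpow_nonneg (jb_pos n).le _) (sq_nonneg _)) (fun n => ?_) h
  exact mul_le_mul_of_nonneg_right
    (Real.rpow_le_rpow_of_exponent_le (jb_one_le n) (by linarith)) (sq_nonneg _)

lemma jet_Cls {s₀ : ℕ} (hs : d + 1 ≤ s₀) (p : ℕ) (s : ℝ) (hp : (p : ℝ) + s₀ + 1 ≤ s)
    (u : ι → Fn d) (hu : ∀ i, InHs s (u i)) (l : Fin (d + 1)) :
    Cls (fun i => sobNorm ((p : ℝ) + s₀ + 1) (u i)) p 0 (fun i x _ => jet (u i) x l) := by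
  set A : ℝ := (2 * π : ℝ) ^ (-(d : ℝ) / 2) with hA
  have hA0 : 0 ≤ A := Real.rpow_nonneg (by positivity) _
  set c : ι → Seq d := fun i n => (A : ℂ) * fCoeff (u i) n with hc
  have huT : ∀ i, u i = TT (c i) := fun i => by
    funext x
    exact ((hu i).2.2 x).tsum_eq.symm
  obtain ⟨C, hC⟩ := sum_le_sob hs (p + 1)
  have hin : ∀ i, InHsSeq (((p + 1 : ℕ) : ℝ) + s₀) (fCoeff (u i)) := fun i =>
    (hu i).2.1.mono (by push_cast; linarith)
  have hn : ∀ i, hsNorm (((p + 1 : ℕ) : ℝ) + s₀) (fCoeff (u i)) = sobNorm ((p : ℝ) + s₀ + 1) (u i) := by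
    intro i; unfold sobNorm; congr 1; push_cast; ring
  have e : ∀ i n, jb n ^ (p + 1) * ‖c i n‖ = A * (jb n ^ (p + 1) * ‖fCoeff (u i) n‖) := fun i n => by
    simp only [hc]
    rw [norm_mul, Complex.norm_real, Real.norm_of_nonneg hA0]; ring
  have hS : ∀ i, Summable fun n => jb n ^ (p + 1) * ‖c i n‖ := fun i => by
    simp only [e]; exact (hC _ (hin i)).1.mul_left A
  have hB : ∀ i, ∑' n, jb n ^ (p + 1) * ‖c i n‖ ≤ A * C * sobNorm ((p : ℝ) + s₀ + 1) (u i) := fun i => by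
    simp only [e]
    rw [tsum_mul_left, mul_assoc, ← hn]
    exact mul_le_mul_of_nonneg_left (hC _ (hin i)).2 hA0
  have h := TT_Cls hS ⟨_, hB⟩
  refine Fin.cases ?_ (fun j => ?_) l
  · exact h.pred.cast rfl fun i x ξ => by simp [jet, huT i]
  · refine (h.2.2 (Sum.inl j)).cast (by simp [ordK]) fun i x ξ => ?_
    simp [jet, ← huT i, DD, pdx, pdF]

end

section
variable {ι : Type} {w w₁ w₂ : ι → ℝ}

lemma fderiv_wdM_zero {F : (Fin (d + 1) → ℂ) → ℂ} (hF : GoodF d F) (k : Fin (d + 1)) :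
    fderiv ℝ (wdM k F) 0 = 0 := by
  have hdd : DifferentiableAt ℝ (fun y => fderiv ℝ F y) 0 :=
    ((hF.1.fderiv_right (m := (⊤ : ℕ∞)) (by simp)).differentiable (by simp)) 0
  have h2 : ∀ v v' : Fin (d + 1) → ℂ, fderiv ℝ (fderiv ℝ F) 0 v v' = 0 := by
    intro v v'
    have := iteratedFDeriv_two_apply (𝕜 := ℝ) F 0 ![v, v']
    rw [hF.2.2 2 le_rfl] at this
    simpa using this.symm
  have hv : ∀ v' : Fin (d + 1) → ℂ, HasFDerivAt (fun y => fderiv ℝ F y v')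
      (0 : (Fin (d + 1) → ℂ) →L[ℝ] ℂ) 0 := by
    intro v'
    have h := hdd.hasFDerivAt.clm_apply (hasFDerivAt_const v' (0 : Fin (d + 1) → ℂ))
    refine h.congr_fderiv ?_
    ext v
    simp [h2]
  have h := ((hv (Pi.single k 1)).add ((hv (Pi.single k Complex.I)).const_mul Complex.I)).mul_const
    ((2 : ℂ)⁻¹)
  have h' : HasFDerivAt (wdM k F) (0 : (Fin (d + 1) → ℂ) →L[ℝ] ℂ) 0 := by
    refine (h.congr_fderiv (by ext v; simp)).congr_of_eventuallyEq (Eventually.of_forall fun y => ?_)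
    simp [wdM, div_eq_mul_inv]
  exact h'.fderiv

lemma wdPM_zero {F : (Fin (d + 1) → ℂ) → ℂ} (hF : GoodF d F) (j k : Fin (d + 1)) :
    wdP j (wdM k F) 0 = 0 := by
  unfold wdP; rw [fderiv_wdM_zero hF]; simp

lemma wdMM_zero {F : (Fin (d + 1) → ℂ) → ℂ} (hF : GoodF d F) (j k : Fin (d + 1)) :
    wdM j (wdM k F) 0 = 0 := by
  rw [wdM, fderiv_wdM_zero hF]; simp

lemma cls_ball {n : ℕ} {p : ℕ} {z : Fin n → ι → Sym d} (h0 : ∀ i, 0 ≤ w i) (K : ℝ)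
    (hK : ∀ i, w i ≤ K) (hz : ∀ j, Cls w p 0 (z j)) :
    ∃ r : ℝ, 0 ≤ r ∧ ∀ i x ξ, (fun j => z j i x ξ) ∈ Metric.closedBall (0 : Fin n → ℂ) r := by
  choose D hD using fun j => (hz j).bnd
  have hs : 0 ≤ ∑ j, |D j| := Finset.sum_nonneg fun _ _ => abs_nonneg _
  refine ⟨(∑ j, |D j|) * |K|, by positivity, fun i x ξ => ?_⟩
  rw [mem_closedBall_zero_iff, pi_norm_le_iff_of_nonneg (by positivity)]
  intro j
  have h3 := hD j i x ξ
  rw [Real.rpow_zero, mul_one] at h3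
  refine h3.trans ?_
  have h4 : |D j| ≤ ∑ j, |D j| :=
    Finset.single_le_sum (f := fun j => |D j|) (fun _ _ => abs_nonneg _) (Finset.mem_univ j)
  exact mul_le_mul ((le_abs_self _).trans h4) ((hK i).trans (le_abs_self K)) (h0 i) hs

lemma til_Cls {s₀ : ℕ} (hs : d + 1 ≤ s₀) (p : ℕ) (s : ℝ) (hp : (p : ℝ) + s₀ + 1 ≤ s)
    (u : ι → Fn d) (hu : ∀ i, InHs s (u i)) (K : ℝ)
    (hK : ∀ i, sobNorm ((p : ℝ) + s₀ + 1) (u i) ≤ K)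
    {χ : ℝ → ℝ} (hχ : IsCutoff χ) {R : ℝ} (hR : 0 < R)
    (G : Fin d → Fin d → (Fin (d + 1) → ℂ) → ℂ) (hG : ∀ j k, ContDiffOn ℝ (⊤ : ℕ∞) (G j k) Set.univ)
    (hG0 : ∀ j k, G j k 0 = 0) :
    Cls (fun i => sobNorm ((p : ℝ) + s₀ + 1) (u i)) p 0 (fun i x ξ =>
      ((((rnorm ξ) ^ 2)⁻¹ * cutXR χ R ξ : ℝ) : ℂ) *
        ∑ j, ∑ k, ((ξ j * ξ k : ℝ) : ℂ) * G j k (jet (u i) x)) := by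
  have h0 : ∀ i, 0 ≤ sobNorm ((p : ℝ) + s₀ + 1) (u i) := fun i => Real.sqrt_nonneg _
  have hj := fun l => jet_Cls hs p s hp u hu l
  obtain ⟨r, hr, hQ⟩ := cls_ball h0 K hK hj
  have h1 : ∀ j k, Cls (fun i => sobNorm ((p : ℝ) + s₀ + 1) (u i)) p 0
      (fun i x (_ : Vec d) => G j k (jet (u i) x)) := fun j k =>
    Cls.comp_zero isOpen_univ (isCompact_closedBall _ r) (convex_closedBall _ _)
      (Metric.mem_closedBall_self hr) (Set.subset_univ _) hQ h0 K hK hj (hG j k) (hG0 j k)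
  have h2 : ∀ j k, _ := fun j k => Cls.of_one_mul ((Cls_mult (ι := ι) (p := p) hχ hR j k).mul (h1 j k))
  refine (Cls.sum Finset.univ fun j => Cls.sum Finset.univ fun k => h2 j k).cast (by simp)
    fun i x ξ => ?_
  rw [Finset.mul_sum]
  refine Finset.sum_congr rfl fun j _ => ?_
  rw [Finset.mul_sum]
  refine Finset.sum_congr rfl fun k _ => ?_
  ring

lemma cut_mem {χ : ℝ → ℝ} (hχ : IsCutoff χ) (R : ℝ) (ξ : Vec d) :
    0 ≤ cutXR χ R ξ ∧ cutXR χ R ξ ≤ 1 := by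
  have := hχ.mem (rnorm ξ / R)
  unfold cutXR
  constructor <;> linarith [this.1, this.2]

/-- ellipticity gives a uniform lower bound -/
lemma elliptic_lower {F : (Fin (d + 1) → ℂ) → ℂ} (hE : Elliptic d F) {χ : ℝ → ℝ} (hχ : IsCutoff χ)
    (R : ℝ) (B : ℝ) (hB : 0 ≤ B) : ∃ c > (0 : ℝ), c ≤ 1 ∧ ∀ (u : Fn d) (x ξ : Vec d),
      ‖a2til F u χ R x ξ‖ ≤ B → ‖b2til F u χ R x ξ‖ ≤ B →
      c ≤ 1 + (a2til F u χ R x ξ).re - ‖b2til F u χ R x ξ‖ := by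
  obtain ⟨c₁, hc₁, c₂, hc₂, h⟩ := hE
  refine ⟨min (1 / 2) (c₂ / (4 * (1 + 2 * B))), by positivity,
    (min_le_left _ _).trans (by norm_num), fun u x ξ ha hb => ?_⟩
  by_cases hξ : ξ = 0
  · subst hξ
    have : (rnorm (0 : Vec d) ^ 2)⁻¹ = 0 := by simp [rnorm]
    have h1 : a2til F u χ R x 0 = 0 := by unfold a2til; rw [this]; simp
    have h2 : b2til F u χ R x 0 = 0 := by unfold b2til; rw [this]; simp
    rw [h1, h2]; simp
    left; norm_num
  obtain ⟨h1, h2⟩ := h ξ (jet u x)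
  replace h2 := h2 hξ
  have hn : 0 < nsq ξ := by
    refine (nsq_nonneg ξ).lt_of_ne' fun h0 => hξ ?_
    funext i
    have := (Finset.sum_eq_zero_iff_of_nonneg (fun i _ => sq_nonneg (ξ i))).1 h0 i (Finset.mem_univ i)
    simpa using this
  have hr : rnorm ξ ^ 2 = nsq ξ := Real.sq_sqrt (nsq_nonneg ξ)
  have e1 : (∑ j, ∑ k, ((ξ j * ξ k : ℝ) : ℂ) *
        ((if j = k then 1 else 0) + wdP (Fin.succ j) (wdM (Fin.succ k) F) (jet u x)))
        = (nsq ξ : ℂ) + a2sym F u x ξ := by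
    unfold a2sym nsq
    simp only [mul_add, Finset.sum_add_distrib]
    congr 1
    simp [sq]
  rw [e1, Complex.add_re, Complex.ofReal_re] at h1
  have e2 : (∑ j, ∑ k, ((ξ j * ξ k : ℝ) : ℂ) * wdP (Fin.succ j) (wdM (Fin.succ k) F) (jet u x))
    = a2sym F u x ξ := rfl
  have e3 : (∑ j, ∑ k, ((ξ j * ξ k : ℝ) : ℂ) * wdM (Fin.succ j) (wdM (Fin.succ k) F) (jet u x))
    = b2sym F u x ξ := rfl
  rw [e2, e3] at h2
  have e4 : ∑ i, (ξ i) ^ 2 = nsq ξ := rfl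
  rw [e4] at h1 h2
  obtain ⟨ht0, ht1⟩ := cut_mem hχ R ξ
  have ea : (a2til F u χ R x ξ).re = cutXR χ R ξ * ((a2sym F u x ξ).re / nsq ξ) := by
    unfold a2til; rw [hr, Complex.re_ofReal_mul]; field_simp
  have eb : ‖b2til F u χ R x ξ‖ = cutXR χ R ξ * (‖b2sym F u x ξ‖ / nsq ξ) := by
    unfold b2til
    rw [hr, norm_mul, Complex.norm_real, Real.norm_of_nonneg (by positivity)]; field_simp
  have ha' : (a2til F u χ R x ξ).re ≤ B := (Complex.re_le_norm _).trans ha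
  rw [← div_pow] at h2
  rw [ea] at ha' ⊢
  rw [eb] at hb ⊢
  have h1' : 0 < 1 + (a2sym F u x ξ).re / nsq ξ := by
    have : c₁ ≤ 1 + (a2sym F u x ξ).re / nsq ξ := by
      rw [← sub_le_iff_le_add', le_div_iff₀ hn]; linarith
    linarith
  have hb0 : 0 ≤ ‖b2sym F u x ξ‖ / nsq ξ := by positivity
  generalize (a2sym F u x ξ).re / nsq ξ = a at *
  generalize ‖b2sym F u x ξ‖ / nsq ξ = b at *
  generalize cutXR χ R ξ = t at *
  have hab : 0 < 1 + a - b := by nlinarith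
  rcases le_or_gt t (1 / 2) with ht | ht
  · refine (min_le_left _ _).trans ?_
    nlinarith [mul_nonneg ht0 hab.le]
  · refine (min_le_right _ _).trans ?_
    rw [div_le_iff₀ (by positivity)]
    have k1 : t * (1 + a + b) ≤ 1 + 2 * B := by nlinarith
    have k2 : c₂ * t ^ 2 ≤ (t * (1 + a - b)) * (t * (1 + a + b)) := by nlinarith [sq_nonneg t]
    have k3 : (t * (1 + a - b)) * (t * (1 + a + b)) ≤ (t * (1 + a - b)) * (1 + 2 * B) :=
      mul_le_mul_of_nonneg_left k1 (mul_nonneg ht0 hab.le)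
    have k4 : c₂ * (1 / 4) ≤ c₂ * t ^ 2 := mul_le_mul_of_nonneg_left (by nlinarith) hc₂.le
    have k5 : 0 ≤ (1 - t) * (1 + 2 * B) := mul_nonneg (by linarith) (by positivity)
    nlinarith

/-- the cone -/
def cone : Set (Fin 2 → ℂ) := {z | ‖z 1‖ < 1 + (z 0).re}

lemma isOpen_cone : IsOpen cone := isOpen_lt (by fun_prop) (by fun_prop)

def lamG (z : Fin 2 → ℂ) : ℝ := Real.sqrt ((1 + (z 0).re) ^ 2 - ‖z 1‖ ^ 2)
def denG (z : Fin 2 → ℂ) : ℝ := Real.sqrt (2 * lamG z * (1 + (z 0).re + lamG z))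

lemma cone_pos {z : Fin 2 → ℂ} (hz : z ∈ cone) : 0 < (1 + (z 0).re) ^ 2 - ‖z 1‖ ^ 2 := by
  have h1 : ‖z 1‖ < 1 + (z 0).re := hz
  have := norm_nonneg (z 1)
  nlinarith

lemma lamG_pos {z : Fin 2 → ℂ} (hz : z ∈ cone) : 0 < lamG z := Real.sqrt_pos.2 (cone_pos hz)

lemma cone_pos' {z : Fin 2 → ℂ} (hz : z ∈ cone) : 0 < 2 * lamG z * (1 + (z 0).re + lamG z) := by
  have h1 : ‖z 1‖ < 1 + (z 0).re := hz
  have h2 := norm_nonneg (z 1)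
  have h3 := lamG_pos hz
  have : 0 < 1 + (z 0).re := by linarith
  positivity

lemma denG_pos {z : Fin 2 → ℂ} (hz : z ∈ cone) : 0 < denG z := Real.sqrt_pos.2 (cone_pos' hz)

lemma contDiff_re0 : ContDiff ℝ (⊤ : ℕ∞) (fun z : Fin 2 → ℂ => (z 0).re) :=
  Complex.reCLM.contDiff.comp (contDiff_apply ℝ ℂ (0 : Fin 2))

lemma contDiff_lamG : ContDiffOn ℝ (⊤ : ℕ∞) lamG cone := by
  have h2 : ContDiff ℝ (⊤ : ℕ∞) (fun z : Fin 2 → ℂ => ‖z 1‖ ^ 2) :=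
    (contDiff_apply ℝ ℂ (1 : Fin 2)).norm_sq ℝ
  have h3 := ((contDiff_const (c := (1 : ℝ))).add contDiff_re0).pow 2 |>.sub h2
  exact h3.contDiffOn.sqrt fun z hz => (cone_pos hz).ne'

lemma contDiff_num : ContDiffOn ℝ (⊤ : ℕ∞) (fun z => 1 + (z 0).re + lamG z) cone :=
  (((contDiff_const (c := (1 : ℝ))).add contDiff_re0).contDiffOn).add contDiff_lamG

lemma contDiff_denG : ContDiffOn ℝ (⊤ : ℕ∞) denG cone :=
  ((contDiffOn_const.mul contDiff_lamG).mul contDiff_num).sqrt fun _ hz => (cone_pos' hz).ne'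

lemma main_Cls {F : (Fin (d + 1) → ℂ) → ℂ} (hF : GoodF d F) (hE : Elliptic d F)
    {s₀ : ℕ} (hs : d + 1 ≤ s₀) (p : ℕ) (s : ℝ) (hp : (p : ℝ) + s₀ + 1 ≤ s)
    (u : ι → Fn d) (hu : ∀ i, InHs s (u i)) (K : ℝ)
    (hK : ∀ i, sobNorm ((p : ℝ) + s₀ + 1) (u i) ≤ K)
    {χ : ℝ → ℝ} (hχ : IsCutoff χ) {R : ℝ} (hR : 0 < R) {N : ι → ℝ}
    (hN : N = fun i => sobNorm ((p : ℝ) + s₀ + 1) (u i)) :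
    Cls N p 0 (fun i => a2plus F (u i) χ R) ∧ Cls N p 0 (fun i => a2til F (u i) χ R) ∧
    Cls N p 0 (fun i => b2til F (u i) χ R) ∧
    Cls N p 0 (fun i => fun x ξ => s1sym F (u i) χ R x ξ - 1) ∧
    Cls N p 0 (fun i => s2sym F (u i) χ R) := by
  subst hN
  have h0 : ∀ i, 0 ≤ sobNorm ((p : ℝ) + s₀ + 1) (u i) := fun i => Real.sqrt_nonneg _
  have hF' : ContDiffOn ℝ (⊤ : ℕ∞) F Set.univ := hF.1.contDiffOn
  have ha : Cls (fun i => sobNorm ((p : ℝ) + s₀ + 1) (u i)) p 0 (fun i => a2til F (u i) χ R) :=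
    til_Cls hs p s hp u hu K hK hχ hR (fun j k => wdP (Fin.succ j) (wdM (Fin.succ k) F))
      (fun j k => contDiffOn_wdP isOpen_univ (contDiffOn_wdM isOpen_univ hF' _) _)
      (fun j k => wdPM_zero hF _ _)
  have hb : Cls (fun i => sobNorm ((p : ℝ) + s₀ + 1) (u i)) p 0 (fun i => b2til F (u i) χ R) :=
    til_Cls hs p s hp u hu K hK hχ hR (fun j k => wdM (Fin.succ j) (wdM (Fin.succ k) F))
      (fun j k => contDiffOn_wdM isOpen_univ (contDiffOn_wdM isOpen_univ hF' _) _)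
      (fun j k => wdMM_zero hF _ _)
  set z : Fin 2 → ι → Sym d := ![fun i => a2til F (u i) χ R, fun i => b2til F (u i) χ R] with hz
  have hzc : ∀ j, Cls (fun i => sobNorm ((p : ℝ) + s₀ + 1) (u i)) p 0 (z j) := by
    intro j
    fin_cases j
    · exact ha
    · exact hb
  obtain ⟨r, hr, hball⟩ := cls_ball h0 K hK hzc
  obtain ⟨c, hc, hc1, hlow⟩ := elliptic_lower hE hχ R r hr
  set Q : Set (Fin 2 → ℂ) := {z | c ≤ 1 + (z 0).re - ‖z 1‖} ∩ Metric.closedBall 0 r with hQ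
  have hQcomp : IsCompact Q :=
    (isCompact_closedBall _ _).inter_left (isClosed_le (by fun_prop) (by fun_prop))
  have hQconv : Convex ℝ Q := by
    refine Convex.inter ?_ (convex_closedBall _ _)
    intro y hy y' hy' α β hα hβ hαβ
    simp only [Set.mem_ofPred_eq, Pi.add_apply, Pi.smul_apply, Complex.add_re, Complex.real_smul,
      Complex.re_ofReal_mul] at hy hy' ⊢
    have h3 : ‖(α : ℂ) * y 1 + (β : ℂ) * y' 1‖ ≤ α * ‖y 1‖ + β * ‖y' 1‖ := by
      refine (norm_add_le _ _).trans (le_of_eq ?_)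
      rw [norm_mul, norm_mul, Complex.norm_real, Complex.norm_real, Real.norm_of_nonneg hα,
        Real.norm_of_nonneg hβ]
    have h4 := mul_le_mul_of_nonneg_left hy hα
    have h5 := mul_le_mul_of_nonneg_left hy' hβ
    have h6 : β = 1 - α := by linarith
    subst h6
    nlinarith
  have hQ0 : (0 : Fin 2 → ℂ) ∈ Q := ⟨by simpa using hc1, Metric.mem_closedBall_self hr⟩
  have hQΩ : Q ⊆ cone := fun y hy => by
    have : c ≤ 1 + (y 0).re - ‖y 1‖ := hy.1
    show ‖y 1‖ < 1 + (y 0).re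
    linarith
  have hzQ : ∀ i x ξ, (fun j => z j i x ξ) ∈ Q := by
    intro i x ξ
    have hb' := hball i x ξ
    refine ⟨?_, hb'⟩
    rw [mem_closedBall_zero_iff, pi_norm_le_iff_of_nonneg hr] at hb'
    exact hlow (u i) x ξ (hb' 0) (hb' 1)
  have lam0 : lamG 0 = 1 := by simp [lamG]
  have den0 : denG 0 = 2 := by
    unfold denG; rw [lam0]
    rw [show (2 * 1 * (1 + ((0 : Fin 2 → ℂ) 0).re + 1) : ℝ) = 2 ^ 2 by simp; norm_num]
    exact Real.sqrt_sq (by norm_num)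
  have comp := fun {G : (Fin 2 → ℂ) → ℂ} => Cls.comp_zero (G := G) isOpen_cone hQcomp hQconv hQ0 hQΩ hzQ h0 K hK hzc
  refine ⟨?_, ha, hb, ?_, ?_⟩
  · exact comp (G := fun z => ((lamG z - 1 : ℝ) : ℂ))
      (Complex.ofRealCLM.contDiff.comp_contDiffOn (contDiff_lamG.sub contDiffOn_const))
      (by simp [lam0])
  · refine (comp (G := fun z => (((1 + (z 0).re + lamG z) / denG z - 1 : ℝ) : ℂ))
      (Complex.ofRealCLM.contDiff.comp_contDiffOn ((contDiff_num.div contDiff_denG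
        fun z hz => (denG_pos hz).ne').sub contDiffOn_const))
      (by simp [lam0, den0])).cast rfl fun i x ξ => ?_
    rw [Complex.ofReal_sub, Complex.ofReal_one]; rfl
  · have hden : ContDiffOn ℝ (⊤ : ℕ∞) (fun z => ((denG z : ℝ) : ℂ)) cone :=
      Complex.ofRealCLM.contDiff.comp_contDiffOn contDiff_denG
    have hn : ContDiffOn ℝ (⊤ : ℕ∞) (fun z : Fin 2 → ℂ => -(z 1)) cone :=
      (contDiff_apply ℝ ℂ (1 : Fin 2)).neg.contDiffOn
    have hq : ContDiffOn ℝ (⊤ : ℕ∞) (fun z => -(z 1) / ((denG z : ℝ) : ℂ)) cone := by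
      simp only [div_eq_mul_inv]
      exact hn.mul (hden.inv (fun z hz => by exact_mod_cast (denG_pos hz).ne'))
    exact comp (G := fun z => -(z 1) / ((denG z : ℝ) : ℂ)) hq (by simp)

end

section
variable {ι : Type} {w w₁ w₂ : ι → ℝ}

lemma Cls.dx {p : ℕ} {m : ℝ} {a : ι → Sym d} (h : Cls w (p + 1) m a) (j : Fin d) :
    Cls w p m (fun i => pdx j (a i)) :=
  Cls.cast (h.2.2 (Sum.inl j)) (by simp [ordK]) fun _ _ _ => rfl

lemma Cls.dxi {p : ℕ} {m : ℝ} {a : ι → Sym d} (h : Cls w (p + 1) m a) (j : Fin d) :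
    Cls w p (m - 1) (fun i => pdxi j (a i)) :=
  Cls.cast (h.2.2 (Sum.inr j)) (by simp [ordK]) fun _ _ _ => rfl

lemma Cls.poisson {p : ℕ} {m₁ m₂ m : ℝ} {a b : ι → Sym d} (ha : Cls w₁ (p + 1) m₁ a)
    (hb : Cls w₂ (p + 1) m₂ b) (hm : m = m₁ + m₂ - 1) :
    Cls (fun i => w₁ i * w₂ i) p m (fun i => poisson (a i) (b i)) := by
  subst hm
  refine Cls.sum Finset.univ fun j => ?_
  exact (((ha.dxi j).mul (hb.dx j)).cast (by ring) fun _ _ _ => rfl).sub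
    (((ha.dx j).mul (hb.dxi j)).cast (by ring) fun _ _ _ => rfl)

lemma Cls.sigmaB {p : ℕ} {m₁ m₂ m : ℝ} {a b : ι → Sym d} (ha : Cls w₁ (p + 2) m₁ a)
    (hb : Cls w₂ (p + 2) m₂ b) (hm : m = m₁ + m₂ - 2) :
    Cls (fun i => w₁ i * w₂ i) p m (fun i => sigmaB (a i) (b i)) := by
  subst hm
  refine Cls.sum Finset.univ fun j => Cls.sum Finset.univ fun k => ?_
  have h1 := (((ha.dxi k).dxi j).mul ((hb.dx k).dx j)).cast (m' := m₁ + m₂ - 2) (by ring)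
    fun _ _ _ => rfl
  have h2 := ((((ha.dxi k).dx j).mul ((hb.dx k).dxi j)).smul 2).cast (m' := m₁ + m₂ - 2) (by ring)
    fun _ _ _ => rfl
  have h3 := (((ha.dx k).dx j).mul ((hb.dxi k).dxi j)).cast (m' := m₁ + m₂ - 2) (by ring)
    fun _ _ _ => rfl
  exact ((h1.sub h2).add h3).cast rfl fun _ _ _ => by ring

lemma brackets_Cls {F : (Fin (d + 1) → ℂ) → ℂ} (hF : GoodF d F) (hE : Elliptic d F)
    {s₀ : ℕ} (hs : d + 1 ≤ s₀) (p : ℕ) (s : ℝ) (hp : (p : ℝ) + s₀ + 3 ≤ s)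
    (u : ι → Fn d) (hu : ∀ i, InHs s (u i)) (K : ℝ)
    (hK : ∀ i, sobNorm ((p : ℝ) + s₀ + 3) (u i) ≤ K)
    {χ : ℝ → ℝ} (hχ : IsCutoff χ) {R : ℝ} (hR : 0 < R) {N : ι → ℝ}
    (hN : N = fun i => sobNorm ((p : ℝ) + s₀ + 3) (u i)) :
    Cls N p (-1) (fun i => poisson (s2sym F (u i) χ R) (s1sym F (u i) χ R)) ∧
    Cls N p (-1) (fun i => poisson (s2sym F (u i) χ R) (starSym (s2sym F (u i) χ R))) ∧
    Cls N p (-2) (fun i => g1sym F (u i) χ R) ∧ Cls N p (-2) (fun i => g2sym F (u i) χ R) := by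
  have e : ((p + 2 : ℕ) : ℝ) + s₀ + 1 = (p : ℝ) + s₀ + 3 := by push_cast; ring
  have h0 : ∀ i, 0 ≤ N i := fun i => by rw [hN]; exact Real.sqrt_nonneg _
  obtain ⟨-, -, -, h1, h2⟩ := main_Cls hF hE hs (p + 2) s (by rw [e]; exact hp) u hu K
    (by rw [e]; exact hK) hχ hR (N := N) (by rw [e]; exact hN)
  have one : ∀ {q : ℕ} {m : ℝ} {a : ι → Sym d}, Cls N q m a → Cls (fun _ => 1) q m a :=
    fun h => h.weight K h0 fun i => by rw [hN, mul_one]; exact hK i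
  have k1 : Cls (fun _ => 1) (p + 2) 0 (fun i => s1sym F (u i) χ R) :=
    ((one h1).add (Cls.const 1)).cast rfl fun _ _ _ => by ring
  have k2 := one h2
  have c2 := h2.star
  have kc2 := one c2
  have p21 : Cls N (p + 1) (-1) (fun i => poisson (s2sym F (u i) χ R) (s1sym F (u i) χ R)) :=
    (h2.poisson k1 (by ring)).of_mul_one
  have p12 : Cls N (p + 1) (-1) (fun i => poisson (s1sym F (u i) χ R) (s2sym F (u i) χ R)) :=
    (k1.poisson h2 (by ring)).of_one_mul
  have p22 : Cls N (p + 1) (-1)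
      (fun i => poisson (s2sym F (u i) χ R) (starSym (s2sym F (u i) χ R))) :=
    (h2.poisson kc2 (by ring)).of_mul_one
  have q1 : Cls N (p + 1) (-1) (fun i => s1_1 F (u i) χ R) := by
    have t1 := (p22.mul k1.pred).of_mul_one
    have t2 := (((p12.smul 2).mul kc2.pred)).of_mul_one
    exact ((t1.add t2).smul (1 / (2 * Complex.I))).cast (by ring) fun _ _ _ => rfl
  have q2 : Cls N (p + 1) (-1) (fun i => s2_1 F (u i) χ R) := by
    have t1 := (p22.mul k2.pred).of_mul_one
    have t2 := (((p12.smul 2).mul k1.pred)).of_mul_one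
    exact ((t1.add t2).smul (1 / (2 * Complex.I))).cast (by ring) fun _ _ _ => rfl
  refine ⟨p21.pred, p22.pred, ?_, ?_⟩
  · have t1 := ((q1.poisson k1.pred (m := -2) (by ring)).of_mul_one).smul (1 / (2 * Complex.I))
    have t2 := ((q2.poisson kc2.pred (m := -2) (by ring)).of_mul_one).smul (1 / (2 * Complex.I))
    have t3 := ((h2.sigmaB kc2 (m := -2) (by ring)).of_mul_one).smul (1 / 8)
    exact (t1.sub t2).add t3
  · have t1 := ((q1.poisson k2.pred (m := -2) (by ring)).of_mul_one).smul (-(1 / (2 * Complex.I)))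
    have t2 := ((q2.poisson k1.pred (m := -2) (by ring)).of_mul_one).smul (1 / (2 * Complex.I))
    exact t1.add t2

end

section
def Ev (a : Sym d) : Prop := ∀ x ξ, a x (-ξ) = a x ξ
def Od (a : Sym d) : Prop := ∀ x ξ, a x (-ξ) = - a x ξ

lemma fderiv_neg_arg (f : Vec d → ℂ) (ξ : Vec d) (v : Vec d) :
    fderiv ℝ (fun η => f (-η)) ξ v = - fderiv ℝ f (-ξ) v := by
  have h := (ContinuousLinearEquiv.neg ℝ (M := Vec d)).comp_right_fderiv (f := f) (x := ξ)
  have h' : fderiv ℝ (fun η => f (-η)) ξ v = fderiv ℝ f (-ξ) (-v) := congrArg (fun L => L v) h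
  rw [h', map_neg]

lemma Ev.dx {a : Sym d} (h : Ev a) (j : Fin d) : Ev (pdx j a) := fun x ξ => by
  unfold pdx; simp only [h _ ξ]

lemma Od.dx {a : Sym d} (h : Od a) (j : Fin d) : Od (pdx j a) := fun x ξ => by
  unfold pdx; simp only [h _ ξ]
  rw [fderiv_fun_neg]; rfl

lemma Ev.dxi {a : Sym d} (h : Ev a) (j : Fin d) : Od (pdxi j a) := fun x ξ => by
  have e : (fun η => a x η) = fun η => a x (-η) := by funext η; exact (h x η).symm
  have := fderiv_neg_arg (fun η => a x η) ξ (Pi.single j 1)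
  unfold pdxi
  conv_rhs => rw [e, this]
  rw [neg_neg]

lemma Od.dxi {a : Sym d} (h : Od a) (j : Fin d) : Ev (pdxi j a) := fun x ξ => by
  have e : (fun η => a x η) = fun η => - a x (-η) := by funext η; rw [h x η, neg_neg]
  have := fderiv_neg_arg (fun η => a x η) ξ (Pi.single j 1)
  unfold pdxi
  conv_rhs => rw [e, fderiv_fun_neg, ContinuousLinearMap.neg_apply, this]
  rw [neg_neg]

lemma Ev.star {a : Sym d} (h : Ev a) : Ev (starSym a) := fun x ξ => by
  unfold starSym; rw [h]

lemma poisson_ee {a b : Sym d} (ha : Ev a) (hb : Ev b) : Od (poisson a b) := fun x ξ => by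
  unfold poisson
  rw [← Finset.sum_neg_distrib]
  refine Finset.sum_congr rfl fun j _ => ?_
  rw [ha.dxi j, hb.dx j, ha.dx j, hb.dxi j]; ring

lemma poisson_oe {a b : Sym d} (ha : Od a) (hb : Ev b) : Ev (poisson a b) := fun x ξ => by
  unfold poisson
  refine Finset.sum_congr rfl fun j _ => ?_
  rw [ha.dxi j, hb.dx j, ha.dx j, hb.dxi j]; ring

lemma sigmaB_ee {a b : Sym d} (ha : Ev a) (hb : Ev b) : Ev (sigmaB a b) := fun x ξ => by
  unfold sigmaB
  refine Finset.sum_congr rfl fun j _ => Finset.sum_congr rfl fun k _ => ?_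
  rw [(ha.dxi k).dxi j, (hb.dx k).dx j, (ha.dxi k).dx j, (hb.dx k).dxi j, (ha.dx k).dx j,
    (hb.dxi k).dxi j]
  ring

section
variable (F : (Fin (d + 1) → ℂ) → ℂ) (u : Fn d) (χ : ℝ → ℝ) (R : ℝ)

lemma rnorm_neg' (ξ : Vec d) : rnorm (-ξ) = rnorm ξ := by simp [rnorm]

lemma cutXR_neg (ξ : Vec d) : cutXR χ R (-ξ) = cutXR χ R ξ := by simp [cutXR, rnorm_neg']

lemma a2til_ev : Ev (a2til F u χ R) := fun x ξ => by
  simp [a2til, a2sym, rnorm_neg', cutXR_neg]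

lemma b2til_ev : Ev (b2til F u χ R) := fun x ξ => by
  simp [b2til, b2sym, rnorm_neg', cutXR_neg]

lemma lam2_ev (x ξ : Vec d) : lam2 F u χ R x (-ξ) = lam2 F u χ R x ξ := by
  unfold lam2; rw [a2til_ev, b2til_ev]

lemma sden_ev (x ξ : Vec d) : sden F u χ R x (-ξ) = sden F u χ R x ξ := by
  unfold sden; rw [a2til_ev, lam2_ev]

lemma s1_ev : Ev (s1sym F u χ R) := fun x ξ => by
  unfold s1sym; rw [a2til_ev, lam2_ev, sden_ev]

lemma s2_ev : Ev (s2sym F u χ R) := fun x ξ => by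
  unfold s2sym; rw [b2til_ev, sden_ev]

lemma a2plus_ev : Ev (a2plus F u χ R) := fun x ξ => by
  unfold a2plus; rw [lam2_ev]

lemma s1_1_od : Od (s1_1 F u χ R) := fun x ξ => by
  unfold s1_1
  rw [poisson_ee (s2_ev F u χ R) (s2_ev F u χ R).star, poisson_ee (s1_ev F u χ R) (s2_ev F u χ R),
    s1_ev F u χ R, s2_ev F u χ R]
  ring

lemma s2_1_od : Od (s2_1 F u χ R) := fun x ξ => by
  unfold s2_1
  rw [poisson_ee (s2_ev F u χ R) (s2_ev F u χ R).star, poisson_ee (s1_ev F u χ R) (s2_ev F u χ R),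
    s1_ev F u χ R, s2_ev F u χ R]
  ring

lemma g1_ev : Ev (g1sym F u χ R) := fun x ξ => by
  unfold g1sym
  rw [poisson_oe (s1_1_od F u χ R) (s1_ev F u χ R),
    poisson_oe (s2_1_od F u χ R) (s2_ev F u χ R).star,
    sigmaB_ee (s2_ev F u χ R) (s2_ev F u χ R).star]

lemma g2_ev : Ev (g2sym F u χ R) := fun x ξ => by
  unfold g2sym
  rw [poisson_oe (s1_1_od F u χ R) (s2_ev F u χ R), poisson_oe (s2_1_od F u χ R) (s1_ev F u χ R)]

lemma S1_od (x ξ : Vec d) (i j : Fin 2) : S1mat F u χ R x (-ξ) i j = - S1mat F u χ R x ξ i j := by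
  have e1 := poisson_ee (s2_ev F u χ R) (s2_ev F u χ R).star x
  have e2 := poisson_ee (s1_ev F u χ R) (s2_ev F u χ R) x
  have e3 := poisson_ee (s1_ev F u χ R) (s2_ev F u χ R).star x
  have e4 := s1_ev F u χ R x
  have e5 := s2_ev F u χ R x
  unfold S1mat Smat
  rw [Matrix.smul_apply, Matrix.smul_apply, Matrix.mul_apply, Matrix.mul_apply,
    Fin.sum_univ_two, Fin.sum_univ_two]
  simp only [e1, e2, e3, e4, e5]
  fin_cases i <;> fin_cases j <;> simp <;> ring

end

lemma goodConst_of {ι : Type} (P : ι → Prop) (f N : ι → ℝ) (hN : ∀ i, 0 ≤ N i)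
    (h : ∀ k : ℕ, ∃ C : ℝ, 0 ≤ C ∧ ∀ i, P i → N i ≤ k → f i ≤ C * N i) :
    ∃ C : ℝ → ℝ, GoodConst C ∧ ∀ i, P i → f i ≤ C (N i) * N i := by
  choose C hC0 hC using h
  refine ⟨fun x => 1 + ∑ k ∈ Finset.range (⌈x⌉₊ + 1), C k, ⟨?_, ?_⟩, ?_⟩
  · intro x y hxy
    refine add_le_add le_rfl (Finset.sum_le_sum_of_subset_of_nonneg ?_ fun k _ _ => hC0 k)
    exact Finset.range_mono (Nat.succ_le_succ (Nat.ceil_mono hxy))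
  · intro x
    have := Finset.sum_nonneg (s := Finset.range (⌈x⌉₊ + 1)) fun k _ => hC0 k
    linarith
  · intro i hi
    refine (hC ⌈N i⌉₊ i hi (Nat.le_ceil _)).trans (mul_le_mul_of_nonneg_right ?_ (hN i))
    have := Finset.single_le_sum (f := C) (s := Finset.range (⌈N i⌉₊ + 1)) (fun k _ => hC0 k)
      (Finset.mem_range.2 (Nat.lt_succ_self _))
    linarith

end

end

/-- Lemma 4.2: the symbols `ã⁺_{2,R}, ã_{2,R}, b̃_{2,R}, s₁, s₂, g₁, g₂`
are even in `ξ`, the entries of `S₁` are odd in `ξ`, and one has the seminorm estimates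
`|ã⁺_{2,R}|_{𝒩⁰_p} + |ã_{2,R}|_{𝒩⁰_p} + |b̃_{2,R}|_{𝒩⁰_p} + |s₁-1|_{𝒩⁰_p} + |s₂|_{𝒩⁰_p}
≤ C₁‖u‖_{H^{p+s₀+1}}` (for `p+s₀+1 ≤ s`) and
`|{s₂,s₁}|_{𝒩^{-1}_p} + |{s₂,conj s₂}|_{𝒩^{-1}_p} + |g_i|_{𝒩^{-2}_p} ≤ C₂‖u‖_{H^{p+s₀+3}}`
(for `p+s₀+3 ≤ s`). -/
theorem statement_14 (d : ℕ) (hd : 1 ≤ d) (F : (Fin (d + 1) → ℂ) → ℂ)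
    (hF : GoodF d F) (hE : Elliptic d F)
    (χ : ℝ → ℝ) (hχ : IsCutoff χ) (R : ℝ) (hR : 0 < R)
    (s₀ : ℕ) (hs₀ : d + 1 ≤ s₀) (s : ℝ) :
    (∀ (u : Fn d) (x ξ : Vec d),
        a2plus F u χ R x (-ξ) = a2plus F u χ R x ξ ∧
        a2til F u χ R x (-ξ) = a2til F u χ R x ξ ∧
        b2til F u χ R x (-ξ) = b2til F u χ R x ξ ∧
        s1sym F u χ R x (-ξ) = s1sym F u χ R x ξ ∧
        s2sym F u χ R x (-ξ) = s2sym F u χ R x ξ ∧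
        g1sym F u χ R x (-ξ) = g1sym F u χ R x ξ ∧
        g2sym F u χ R x (-ξ) = g2sym F u χ R x ξ ∧
        ∀ i j : Fin 2, S1mat F u χ R x (-ξ) i j = -S1mat F u χ R x ξ i j) ∧
    (∀ p : ℕ, (p : ℝ) + s₀ + 1 ≤ s →
      ∃ C₁ : ℝ → ℝ, GoodConst C₁ ∧ ∀ u : Fn d, InHs s u →
        symNorm 0 p (a2plus F u χ R) + symNorm 0 p (a2til F u χ R)
            + symNorm 0 p (b2til F u χ R)
            + symNorm 0 p (fun x ξ => s1sym F u χ R x ξ - 1)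
            + symNorm 0 p (s2sym F u χ R)
          ≤ C₁ (sobNorm ((p : ℝ) + s₀ + 1) u) * sobNorm ((p : ℝ) + s₀ + 1) u) ∧
    (∀ p : ℕ, (p : ℝ) + s₀ + 3 ≤ s →
      ∃ C₂ : ℝ → ℝ, GoodConst C₂ ∧ ∀ u : Fn d, InHs s u →
        symNorm (-1) p (poisson (s2sym F u χ R) (s1sym F u χ R))
            + symNorm (-1) p (poisson (s2sym F u χ R) (starSym (s2sym F u χ R)))
            + symNorm (-2) p (g1sym F u χ R) + symNorm (-2) p (g2sym F u χ R)
          ≤ C₂ (sobNorm ((p : ℝ) + s₀ + 3) u) * sobNorm ((p : ℝ) + s₀ + 3) u) := by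
  refine ⟨fun u x ξ => ⟨a2plus_ev F u χ R x ξ, a2til_ev F u χ R x ξ, b2til_ev F u χ R x ξ,
    s1_ev F u χ R x ξ, s2_ev F u χ R x ξ, g1_ev F u χ R x ξ, g2_ev F u χ R x ξ,
    S1_od F u χ R x ξ⟩, fun p hp => ?_, fun p hp => ?_⟩
  · refine goodConst_of (fun u : Fn d => InHs s u) _ (fun u => sobNorm ((p : ℝ) + s₀ + 1) u)
      (fun u => Real.sqrt_nonneg _) fun k => ?_
    obtain ⟨h1, h2, h3, h4, h5⟩ := main_Cls
      (ι := {u : Fn d // InHs s u ∧ sobNorm ((p : ℝ) + s₀ + 1) u ≤ k}) hF hE hs₀ p s hp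
      (fun i => i.1) (fun i => i.2.1) k (fun i => i.2.2) hχ hR rfl
    obtain ⟨C1, p1, q1⟩ := h1.symNorm_le fun i => Real.sqrt_nonneg _
    obtain ⟨C2, p2, q2⟩ := h2.symNorm_le fun i => Real.sqrt_nonneg _
    obtain ⟨C3, p3, q3⟩ := h3.symNorm_le fun i => Real.sqrt_nonneg _
    obtain ⟨C4, p4, q4⟩ := h4.symNorm_le fun i => Real.sqrt_nonneg _
    obtain ⟨C5, p5, q5⟩ := h5.symNorm_le fun i => Real.sqrt_nonneg _
    refine ⟨C1 + C2 + C3 + C4 + C5, by positivity, fun u hu hk => ?_⟩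
    have r1 := q1 ⟨u, hu, hk⟩
    have r2 := q2 ⟨u, hu, hk⟩
    have r3 := q3 ⟨u, hu, hk⟩
    have r4 := q4 ⟨u, hu, hk⟩
    have r5 := q5 ⟨u, hu, hk⟩
    simp only [add_mul]
    exact add_le_add (add_le_add (add_le_add (add_le_add r1 r2) r3) r4) r5
  · refine goodConst_of (fun u : Fn d => InHs s u) _ (fun u => sobNorm ((p : ℝ) + s₀ + 3) u)
      (fun u => Real.sqrt_nonneg _) fun k => ?_
    obtain ⟨h1, h2, h3, h4⟩ := brackets_Cls
      (ι := {u : Fn d // InHs s u ∧ sobNorm ((p : ℝ) + s₀ + 3) u ≤ k}) hF hE hs₀ p s hp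
      (fun i => i.1) (fun i => i.2.1) k (fun i => i.2.2) hχ hR rfl
    obtain ⟨C1, p1, q1⟩ := h1.symNorm_le fun i => Real.sqrt_nonneg _
    obtain ⟨C2, p2, q2⟩ := h2.symNorm_le fun i => Real.sqrt_nonneg _
    obtain ⟨C3, p3, q3⟩ := h3.symNorm_le fun i => Real.sqrt_nonneg _
    obtain ⟨C4, p4, q4⟩ := h4.symNorm_le fun i => Real.sqrt_nonneg _
    refine ⟨C1 + C2 + C3 + C4, by positivity, fun u hu hk => ?_⟩
    have r1 := q1 ⟨u, hu, hk⟩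
    have r2 := q2 ⟨u, hu, hk⟩
    have r3 := q3 ⟨u, hu, hk⟩
    have r4 := q4 ⟨u, hu, hk⟩
    simp only [add_mul]
    exact add_le_add (add_le_add (add_le_add r1 r2) r3) r4

end QLNLS
end
end
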